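/- arXiv:math/0311072 — 6 statements merged into one kernel-verified Lean document; each statement's English description precedes it below -/
import Mathlib

section
/- If f is a continuous real-valued function on [0,∞) that is operator monotone (i.e., for all bounded self-adjoint operators a, b on any Hilbert space with spectrum in [0,∞), a ≤ b implies f(a) ≤ f(b)), then for every unital C*-algebra A and all self-adjoint elements x, y ∈ A with spectrum in [0,∞), x ≤ y implies f(x) ≤ f(y). -/
/-!
The order of a C⋆-algebra `A` is detected by its positive functionals, and each positive functional
`φ` is a vector functional of its GNS representation `π`. If `f(y) - f(x)` were not positive,
Hahn–Banach separation from the closed positive cone would give a positive `φ` whose value there is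
negative. But `π` commutes with the functional calculus, so operator monotonicity on the
GNS space gives `π (f(y) - f(x)) = f(π y) - f(π x) ≥ 0`, and evaluating at the vector of `1` gives
`φ (f(y) - f(x)) ≥ 0`.
-/

noncomputable section

/-- `f` is `A`-monotone: for self-adjoint `x ≤ y` with spectra in `[0,∞)`,
`f(x) ≤ f(y)` via the continuous functional calculus. -/
def AMonotone (A : Type) [CStarAlgebra A] [PartialOrder A] [StarOrderedRing A]
    (f : ℝ → ℝ) : Prop :=
  ∀ x y : A, IsSelfAdjoint x → IsSelfAdjoint y →
    spectrum ℝ x ⊆ Set.Ici (0:ℝ) → spectrum ℝ y ⊆ Set.Ici (0:ℝ) →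
    x ≤ y → cfc f x ≤ cfc f y

/-- The C*-algebra of `n × n` complex matrices, realized as operators on
`n`-dimensional complex Hilbert space. -/
abbrev MatAlg (n : ℕ) := EuclideanSpace ℂ (Fin n) →L[ℂ] EuclideanSpace ℂ (Fin n)

/-- `f` is matrix monotone of order `n`. -/
def MatrixMonotone (n : ℕ) (f : ℝ → ℝ) : Prop := AMonotone (MatAlg n) f

/-- A (unital) representation of `A` on a Hilbert space `H` is (topologically)
irreducible if the only closed invariant subspaces are trivial. -/
def IsIrreducibleRep {A : Type} [CStarAlgebra A] {H : Type} [NormedAddCommGroup H]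
    [InnerProductSpace ℂ H] [CompleteSpace H] (π : A →⋆ₐ[ℂ] (H →L[ℂ] H)) : Prop :=
  ∀ K : Submodule ℂ H, IsClosed (K : Set H) → (∀ a : A, ∀ x ∈ K, π a x ∈ K) → K = ⊥ ∨ K = ⊤

open scoped ComplexOrder InnerProductSpace

/-- A self-adjoint element which is not positive is detected by a positive functional. -/
theorem exists_positive_functional_re_neg {A : Type} [CStarAlgebra A] [PartialOrder A]
    [StarOrderedRing A] {a : A} (ha : IsSelfAdjoint a) (hneg : ¬ 0 ≤ a) :
    ∃ φ : A →ₚ[ℂ] ℂ, (φ a).re < 0 := by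
  have hconv : Convex ℝ {z : A | 0 ≤ z} := convex_Ici 0
  have hclosed : IsClosed {z : A | 0 ≤ z} := CStarAlgebra.isClosed_nonneg
  obtain ⟨l, u, hlu, hu⟩ := geometric_hahn_banach_point_closed hconv hclosed hneg
  have hu0 : u < 0 := by simpa using hu 0 le_rfl
  -- A linear functional bounded below on a cone is nonnegative there.
  have hl : ∀ z : A, 0 ≤ z → 0 ≤ l z := by
    intro z hz
    by_contra! h
    have := hu ((u / l z) • z) (smul_nonneg (div_nonneg_of_nonpos hu0.le h.le) hz)
    simp [div_mul_cancel₀ _ h.ne] at this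
  -- Precomposing with the real part makes the complexification of `l` real on self-adjoints.
  let g : A →ₗ[ℝ] ℝ := l.toLinearMap ∘ₗ (selfAdjoint.submodule ℝ A).subtype ∘ₗ realPart
  have hval : ∀ z : A, IsSelfAdjoint z → Module.Dual.extendRCLike (𝕜 := ℂ) g z = (l z : ℂ) := by
    intro z hz
    have h1 : g z = l z := by
      change l (realPart z : A) = l z
      rw [hz.coe_realPart]
    have h2 : g (Complex.I • z) = 0 := by
      change l (realPart (Complex.I • z) : A) = 0
      rw [realPart_I_smul, hz.imaginaryPart]
      simp
    simp [Module.Dual.extendRCLike_apply, h1, h2]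
  refine ⟨PositiveLinearMap.mk₀ (Module.Dual.extendRCLike (𝕜 := ℂ) g) fun z hz => ?_, ?_⟩
  · rw [hval z (.of_nonneg hz)]
    exact_mod_cast hl z hz
  · change (Module.Dual.extendRCLike (𝕜 := ℂ) g a).re < 0
    rw [hval a ha]
    exact_mod_cast hlu.trans hu0

/-- The vector of `1` in the GNS space implements the functional. -/
theorem inner_gns_one {A : Type} [CStarAlgebra A] [PartialOrder A] [StarOrderedRing A]
    (φ : A →ₚ[ℂ] ℂ) (a : A) :
    ⟪((φ.toPreGNS 1 : φ.PreGNS) : φ.GNS), φ.gnsStarAlgHom a (φ.toPreGNS 1 : φ.PreGNS)⟫_ℂ = φ a := by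
  change ⟪((φ.toPreGNS 1 : φ.PreGNS) : φ.GNS),
    φ.gnsNonUnitalStarAlgHom a (φ.toPreGNS 1 : φ.PreGNS)⟫_ℂ = φ a
  rw [PositiveLinearMap.gnsNonUnitalStarAlgHom_apply_coe,
    UniformSpace.Completion.inner_coe, PositiveLinearMap.preGNS_inner_def]
  simp

/-- Operator monotone functions are `A`-monotone for every unital C*-algebra `A`. -/
theorem stmt0 (f : ℝ → ℝ) (hf : ContinuousOn f (Set.Ici (0:ℝ)))
    (hop : ∀ (H : Type) [NormedAddCommGroup H] [InnerProductSpace ℂ H] [CompleteSpace H],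
      AMonotone (H →L[ℂ] H) f) :
    ∀ (A : Type) [CStarAlgebra A] [PartialOrder A] [StarOrderedRing A],
      AMonotone A f := by
  intro A _ _ _ x y hx hy hxs hys hxy
  by_contra hcon
  have ha : IsSelfAdjoint (cfc f y - cfc f x) := (cfc_predicate f y).sub (cfc_predicate f x)
  obtain ⟨φ, hφ⟩ := exists_positive_functional_re_neg ha (by rwa [sub_nonneg])
  let π := φ.gnsStarAlgHom
  have hcont : Continuous π := map_continuous π
  have hmap : ∀ z : A, IsSelfAdjoint z → spectrum ℝ z ⊆ Set.Ici (0:ℝ) →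
      π (cfc f z) = cfc f (π z) := fun z hz hzs =>
    StarAlgHomClass.map_cfc π f z (hf.mono hzs) hcont hz (hz.map π)
  have hle := hop φ.GNS (π x) (π y) (hx.map π) (hy.map π)
    ((AlgHom.spectrum_apply_subset (π.toAlgHom.restrictScalars ℝ) x).trans hxs)
    ((AlgHom.spectrum_apply_subset (π.toAlgHom.restrictScalars ℝ) y).trans hys)
    (OrderHomClass.mono π hxy)
  rw [← hmap x hx hxs, ← hmap y hy hys, ContinuousLinearMap.le_def, ← map_sub] at hle
  have h := hle.re_inner_nonneg_right ((φ.toPreGNS 1 : φ.PreGNS) : φ.GNS)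
  rw [inner_gns_one] at h
  exact absurd h hφ.not_ge
end
end

section
/- Let A be a unital C*-algebra such that every irreducible representation of A has dimension at most n. If a continuous function f : [0,∞) → ℝ is matrix monotone of order n, then f is A-monotone. That is, P_n ⊆ P_A. -/
/-!
An inequality between self-adjoint elements of a C⋆-algebra can be tested on pure states, and the
GNS representation of a pure state is irreducible.

* The states of `A` form a compact convex subset of `A → ℂ` with the product topology, so by
  Krein–Milman and Hahn–Banach a self-adjoint `z` with `0 ≤ φ z` for every pure state `φ` is
  positive (`nonneg_of_pure`).
* If `φ` is pure and `P` is the projection onto a closed invariant subspace of its GNS space, then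
  `P` splits `φ` into a convex combination of the vector states of `P ξ` and `ξ - P ξ`, where `ξ` is
  the cyclic vector. Purity makes `P ξ` a multiple of `ξ`, and cyclicity then forces `P = 0` or
  `P = 1` (`irreducible_of_pure`).
* By hypothesis the GNS space `H` of a pure state has dimension at most `n`, hence embeds
  isometrically in `ℂⁿ` by some `V`. The map `a ↦ V π(a) V⋆` is a non-unital ⋆-homomorphism into the
  `n × n` matrices. It intertwines the functional calculus of `f - f 0`, which vanishes at `0`, and
  `f - f 0` inherits matrix monotonicity from `f`. Thus `V π(f(y) - f(x)) V⋆ ≥ 0`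
  (`map_cfc_sub_nonneg`), and evaluating at `V ξ` gives `φ (f(y) - f(x)) ≥ 0`. Working with
  non-unital homomorphisms takes the place of the passage from order `n` to orders `m ≤ n`.
-/

noncomputable section

open scoped ComplexOrder InnerProductSpace

/-- States of `A`, as bare functions `A → ℂ`, so that the state space lives in a product of copies
of `ℂ` and is compact by Tychonoff. The norm bound follows from the other fields; including it
makes compactness immediate. -/
structure IsState {A : Type} [CStarAlgebra A] [PartialOrder A] (φ : A → ℂ) : Prop where
  map_add : ∀ a b, φ (a + b) = φ a + φ b
  map_smul : ∀ (c : ℂ) a, φ (c • a) = c * φ a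
  nonneg : ∀ a, 0 ≤ a → 0 ≤ φ a
  map_one : φ 1 = 1
  bound : ∀ a, ‖φ a‖ ≤ ‖a‖

section
variable {A : Type} [CStarAlgebra A] [PartialOrder A]

lemma isCompact_states : IsCompact {φ : A → ℂ | IsState φ} := by
  have hK : IsCompact (Set.univ.pi fun a : A => Metric.closedBall (0 : ℂ) ‖a‖) :=
    isCompact_univ_pi fun a => isCompact_closedBall _ _
  refine hK.of_isClosed_subset ?_ fun φ hφ a _ => by simpa using hφ.bound a
  have : {φ : A → ℂ | IsState φ} =
      {φ | ∀ a b, φ (a + b) = φ a + φ b} ∩ {φ | ∀ (c : ℂ) a, φ (c • a) = c * φ a} ∩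
      {φ | ∀ a, 0 ≤ a → 0 ≤ φ a} ∩ {φ | φ 1 = 1} ∩ {φ | ∀ a, ‖φ a‖ ≤ ‖a‖} := by
    ext φ
    exact ⟨fun h => ⟨⟨⟨⟨h.1, h.2⟩, h.3⟩, h.4⟩, h.5⟩, fun h => ⟨h.1.1.1.1, h.1.1.1.2, h.1.1.2, h.1.2, h.2⟩⟩
  rw [this]
  simp only [Set.ofPred_forall]
  refine ((((isClosed_iInter fun a => isClosed_iInter fun b => ?_).inter
    (isClosed_iInter fun c => isClosed_iInter fun a => ?_)).inter
    (isClosed_iInter fun a => isClosed_iInter fun ha => ?_)).inter ?_).inter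
    (isClosed_iInter fun a => ?_)
  · exact isClosed_eq (by fun_prop) (by fun_prop)
  · exact isClosed_eq (by fun_prop) (by fun_prop)
  · exact isClosed_le (by fun_prop) (by fun_prop)
  · exact isClosed_eq (by fun_prop) (by fun_prop)
  · exact isClosed_le (by fun_prop) (by fun_prop)

lemma convex_states : Convex ℝ {φ : A → ℂ | IsState φ} := by
  intro φ hφ ψ hψ s t hs ht hst
  refine ⟨fun a b => ?_, fun c a => ?_, fun a ha => ?_, ?_, fun a => ?_⟩
  · simp only [Pi.add_apply, Pi.smul_apply, hφ.map_add, hψ.map_add, smul_add]; ring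
  · simp only [Pi.add_apply, Pi.smul_apply, hφ.map_smul, hψ.map_smul, Complex.real_smul]; ring
  · exact add_nonneg (smul_nonneg hs (hφ.nonneg a ha)) (smul_nonneg ht (hψ.nonneg a ha))
  · simp only [Pi.add_apply, Pi.smul_apply, hφ.map_one, hψ.map_one, Complex.real_smul, mul_one]
    exact_mod_cast hst
  · calc ‖s • φ a + t • ψ a‖ ≤ ‖s • φ a‖ + ‖t • ψ a‖ := norm_add_le _ _
      _ = s * ‖φ a‖ + t * ‖ψ a‖ := by rw [norm_smul_of_nonneg hs, norm_smul_of_nonneg ht]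
      _ ≤ s * ‖a‖ + t * ‖a‖ := by gcongr <;> [exact hφ.bound a; exact hψ.bound a]
      _ = ‖a‖ := by rw [← add_mul, hst, one_mul]

variable [StarOrderedRing A]

/-- The vector state of a unit vector in a representation. -/
lemma isState_inner {H : Type} [NormedAddCommGroup H] [InnerProductSpace ℂ H] [CompleteSpace H]
    (π : A →⋆ₐ[ℂ] (H →L[ℂ] H)) (v : H) (hv : ‖v‖ = 1) :
    IsState (fun a => ⟪v, π a v⟫_ℂ) where
  map_add a b := by simp
  map_smul c a := by simp
  nonneg a ha := by
    obtain ⟨b, rfl⟩ := CStarAlgebra.nonneg_iff_eq_star_mul_self.mp ha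
    have : ⟪v, π (star b * b) v⟫_ℂ = ⟪π b v, π b v⟫_ℂ := by
      simp [map_star, ContinuousLinearMap.star_eq_adjoint, ContinuousLinearMap.adjoint_inner_right]
    rw [this, inner_self_eq_norm_sq_to_K]
    exact pow_nonneg (Complex.zero_le_real.2 (norm_nonneg (π b v))) 2
  map_one := by simp [inner_self_eq_norm_sq_to_K, hv]
  bound a := by
    calc ‖⟪v, π a v⟫_ℂ‖ ≤ ‖v‖ * ‖π a v‖ := norm_inner_le_norm _ _
      _ ≤ ‖v‖ * (‖π a‖ * ‖v‖) := by gcongr; exact (π a).le_opNorm v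
      _ = ‖π a‖ := by simp [hv]
      _ ≤ ‖a‖ := NonUnitalStarAlgHom.norm_apply_le π a

/-- The canonical cyclic vector of the GNS representation, the class of `1`. -/
def cyc (f : A →ₚ[ℂ] ℂ) : f.GNS := ((f.toPreGNS 1 : f.PreGNS) : f.GNS)

lemma gns_cyc (f : A →ₚ[ℂ] ℂ) (a : A) :
    f.gnsStarAlgHom a (cyc f) = ((f.toPreGNS a : f.PreGNS) : f.GNS) := by
  simp [cyc, PositiveLinearMap.gnsStarAlgHom]

lemma inner_cyc (f : A →ₚ[ℂ] ℂ) (a : A) :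
    ⟪cyc f, f.gnsStarAlgHom a (cyc f)⟫_ℂ = f a := by
  rw [gns_cyc, cyc, UniformSpace.Completion.inner_coe, PositiveLinearMap.preGNS_inner_def]
  simp

lemma norm_cyc (f : A →ₚ[ℂ] ℂ) (h1 : f 1 = 1) : ‖cyc f‖ = 1 := by
  have h := inner_cyc f 1
  rw [map_one, one_apply_eq_self, inner_self_eq_norm_sq_to_K, h1] at h
  have h2 : ‖cyc f‖ ^ 2 = 1 := Complex.ofReal_injective (by push_cast; exact h)
  exact (pow_eq_one_iff_of_nonneg (norm_nonneg _) two_ne_zero).1 h2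

/-- Cyclicity of `cyc f`: continuous maps agreeing on its orbit under `A` are equal. -/
lemma cyc_dense (f : A →ₚ[ℂ] ℂ) {F : Type*} [NormedAddCommGroup F] {g₁ g₂ : f.GNS → F}
    (h₁ : Continuous g₁) (h₂ : Continuous g₂)
    (h : ∀ a, g₁ (f.gnsStarAlgHom a (cyc f)) = g₂ (f.gnsStarAlgHom a (cyc f))) (x : f.GNS) :
    g₁ x = g₂ x := by
  induction x using UniformSpace.Completion.induction_on with
  | hp => exact isClosed_eq h₁ h₂
  | ih x => have := h (f.ofPreGNS x); rwa [gns_cyc, f.toPreGNS_ofPreGNS] at this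

/-- A unital positive functional is a vector state of its GNS representation, hence norm-bounded. -/
lemma isState_of_pos (f : A →ₚ[ℂ] ℂ) (h1 : f 1 = 1) : IsState f := by
  have h := isState_inner f.gnsStarAlgHom (cyc f) (norm_cyc f h1)
  simpa only [inner_cyc] using h

/-- States detect positivity: Hahn–Banach separates `z` from the closed positive cone, and the
separating functional is made hermitian and normalised at `1`. -/
lemma exists_state_neg {z : A} (hz : IsSelfAdjoint z) (hz0 : ¬ 0 ≤ z) :
    ∃ φ : A → ℂ, IsState φ ∧ (φ z).re < 0 := by
  obtain ⟨F, u, hFz, hF⟩ := RCLike.geometric_hahn_banach_point_closed (𝕜 := ℂ) (E := A)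
    (t := {a | 0 ≤ a}) (x := z) (convex_Ici 0) CStarAlgebra.isClosed_nonneg hz0
  have hu : u < 0 := by simpa using hF 0 (le_refl (0 : A))
  have hFpos : ∀ a, 0 ≤ a → 0 ≤ (F a).re := by
    intro a ha
    by_contra! hneg
    -- A negative value could be rescaled to equal `u` inside the cone.
    have := hF ((u / (F a).re) • a) (smul_nonneg (div_nonneg_of_nonpos hu.le hneg.le) ha)
    rw [← Complex.coe_smul, map_smul] at this
    simp only [smul_eq_mul, RCLike.re_eq_complex_re, Complex.re_ofReal_mul] at this
    rw [div_mul_cancel₀ _ hneg.ne] at this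
    exact lt_irrefl _ this
  -- The hermitian part of `F`; it takes the real value `re F a` at self-adjoint `a`.
  let G : A →ₗ[ℂ] ℂ :=
    { toFun := fun a => (F a + star (F (star a))) / 2
      map_add' := fun a b => by simp; ring
      map_smul' := fun c a => by simp; ring }
  have hG : ∀ a, IsSelfAdjoint a → G a = ((F a).re : ℂ) := by
    intro a ha
    have : G a = (F a + star (F (star a))) / 2 := rfl
    rw [this, ha.star_eq]
    apply Complex.ext <;> simp
  have hGpos : ∀ a, 0 ≤ a → 0 ≤ G a := by
    intro a ha
    rw [hG a (.of_nonneg ha)]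
    exact_mod_cast hFpos a ha
  -- Since `-‖z‖ ≤ z`, the bound `re F z < 0` forces `re F 1 > 0`.
  have hr : 0 < (F 1).re := by
    have h : (0 : ℝ) ≤ (F (algebraMap ℝ A ‖z‖ + z)).re :=
      hFpos _ (by have := hz.neg_algebraMap_norm_le_self; exact neg_le_iff_add_nonneg'.mp this)
    rw [Algebra.algebraMap_eq_smul_one, ← Complex.coe_smul, map_add, map_smul] at h
    simp only [smul_eq_mul, Complex.add_re, Complex.re_ofReal_mul] at h
    have hFz' : (F z).re < 0 := lt_trans hFz hu
    by_contra! h0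
    nlinarith [norm_nonneg z]
  set r := (F 1).re
  let f : A →ₚ[ℂ] ℂ := PositiveLinearMap.mk₀ (((r⁻¹ : ℝ) : ℂ) • G) fun a ha => by
    have : (0 : ℂ) ≤ ((r⁻¹ : ℝ) : ℂ) := by exact_mod_cast (inv_pos.2 hr).le
    exact mul_nonneg this (hGpos a ha)
  have hf : ∀ a, IsSelfAdjoint a → f a = ((r⁻¹ * (F a).re : ℝ) : ℂ) := by
    intro a ha
    change ((r⁻¹ : ℝ) : ℂ) * G a = _
    rw [hG a ha]; push_cast; rfl
  refine ⟨f, isState_of_pos f ?_, ?_⟩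
  · rw [hf 1 (.one A), inv_mul_cancel₀ hr.ne']; simp
  · rw [hf z hz, Complex.ofReal_re]
    exact mul_neg_of_pos_of_neg (inv_pos.2 hr) (lt_trans hFz hu)

/-- Pure states detect positivity, since the states are the closed convex hull of the pure ones. -/
lemma nonneg_of_pure {z : A} (hz : IsSelfAdjoint z)
    (h : ∀ φ ∈ {φ : A → ℂ | IsState φ}.extremePoints ℝ, 0 ≤ (φ z).re) : 0 ≤ z := by
  by_contra hz0
  obtain ⟨φ, hφ, hneg⟩ := exists_state_neg hz hz0
  have hmem : φ ∈ closure (convexHull ℝ ({φ : A → ℂ | IsState φ}.extremePoints ℝ)) := by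
    rw [closure_convexHull_extremePoints isCompact_states convex_states]; exact hφ
  have hsub : closure (convexHull ℝ ({φ : A → ℂ | IsState φ}.extremePoints ℝ)) ⊆
      {φ : A → ℂ | 0 ≤ (φ z).re} := by
    refine closure_minimal (convexHull_min h ?_) ?_
    · intro φ hφ ψ hψ s t hs ht _
      have : 0 ≤ s * (φ z).re + t * (ψ z).re := by
        have h1 : 0 ≤ (φ z).re := hφ
        have h2 : 0 ≤ (ψ z).re := hψ
        positivity
      simpa using this
    · exact isClosed_le continuous_const (by fun_prop)
  exact absurd (hsub hmem) (not_le.2 hneg)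

/-- The GNS representation of a pure state is irreducible. -/
lemma irreducible_of_pure (f : A →ₚ[ℂ] ℂ)
    (hf : (f : A → ℂ) ∈ {φ : A → ℂ | IsState φ}.extremePoints ℝ) :
    IsIrreducibleRep f.gnsStarAlgHom := by
  intro K hK hinv
  have : CompleteSpace K := hK.completeSpace_coe
  set π := f.gnsStarAlgHom
  set ξ := cyc f
  set P := K.starProjection
  have hcomm : ∀ a x, P (π a x) = π a (P x) := by
    intro a x
    refine (Submodule.eq_starProjection_of_mem_of_inner_eq_zero
      (hinv a _ (K.starProjection_apply_mem x)) fun w hw => ?_)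
    rw [← map_sub, ← ContinuousLinearMap.adjoint_inner_right, ← ContinuousLinearMap.star_eq_adjoint,
      ← map_star]
    exact K.starProjection_inner_eq_zero x _ (hinv _ w hw)
  have hξ : ‖ξ‖ = 1 := norm_cyc f hf.1.map_one
  have hPmem : ∀ x, P x ∈ K := K.starProjection_apply_mem
  have hPK : ∀ x ∈ K, P x = x := fun x hx => Submodule.starProjection_eq_self_iff.2 hx
  by_cases hp : P ξ = 0
  · left
    have h0 : ∀ x, P x = 0 := cyc_dense f (g₁ := P) (g₂ := fun _ => 0) P.continuous
      continuous_const fun a => by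
        change P (π a ξ) = 0
        rw [hcomm, hp, map_zero]
    exact (Submodule.eq_bot_iff K).2 fun x hx => by rw [← hPK x hx, h0]
  by_cases hq : ξ - P ξ = 0
  · right
    have h0 : ∀ x, P x = x := cyc_dense f (g₁ := P) (g₂ := fun x => x) P.continuous
      continuous_id fun a => by
        change P (π a ξ) = π a ξ
        rw [hcomm, ← sub_eq_zero.1 hq]
    exact (Submodule.eq_top_iff').2 fun x => by rw [← h0 x]; exact hPmem x
  exfalso
  have hort : ∀ x y, ⟪P x, y - P y⟫_ℂ = 0 := fun x y => by
    rw [← inner_conj_symm, K.starProjection_inner_eq_zero y _ (hPmem x), map_zero]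
  have hort' : ∀ x y, ⟪y - P y, P x⟫_ℂ = 0 := fun x y =>
    K.starProjection_inner_eq_zero y _ (hPmem x)
  have hpyth : ‖P ξ‖ ^ 2 + ‖ξ - P ξ‖ ^ 2 = 1 := by
    have := norm_add_sq_eq_norm_sq_add_norm_sq_of_inner_eq_zero (𝕜 := ℂ) _ _ (hort ξ ξ)
    rw [add_sub_cancel, hξ] at this
    nlinarith
  -- After normalisation, a nonzero vector `v` defines a state.
  have key : ∀ v : f.GNS, v ≠ 0 → IsState (fun a => (‖v‖ ^ 2)⁻¹ • ⟪v, π a v⟫_ℂ) := by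
    intro v hv
    have := isState_inner π (((‖v‖⁻¹ : ℝ) : ℂ) • v) (by
      rw [norm_smul, Complex.norm_real, norm_inv, norm_norm, inv_mul_cancel₀ (norm_ne_zero_iff.2 hv)])
    convert this using 2 with a
    rw [map_smul, inner_smul_left, inner_smul_right, Complex.conj_ofReal, Complex.real_smul]
    push_cast; ring
  have hpp : 0 < ‖P ξ‖ ^ 2 := by have := norm_pos_iff.2 hp; positivity
  have hqq : 0 < ‖ξ - P ξ‖ ^ 2 := by have := norm_pos_iff.2 hq; positivity
  have hdec : ‖P ξ‖ ^ 2 • (fun a => (‖P ξ‖ ^ 2)⁻¹ • ⟪P ξ, π a (P ξ)⟫_ℂ) +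
      ‖ξ - P ξ‖ ^ 2 • (fun a => (‖ξ - P ξ‖ ^ 2)⁻¹ • ⟪ξ - P ξ, π a (ξ - P ξ)⟫_ℂ) =
      (f : A → ℂ) := by
    ext a
    simp only [Pi.add_apply, Pi.smul_apply]
    rw [smul_inv_smul₀ hpp.ne', smul_inv_smul₀ hqq.ne', ← inner_cyc f a]
    change _ = ⟪ξ, π a ξ⟫_ℂ
    have e1 : ⟪P ξ, π a (ξ - P ξ)⟫_ℂ = 0 := by
      rw [map_sub, ← hcomm]; exact hort _ _
    have e2 : ⟪ξ - P ξ, π a (P ξ)⟫_ℂ = 0 := by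
      rw [← hcomm]; exact hort' _ _
    conv_rhs => rw [← add_sub_cancel (P ξ) ξ]
    rw [map_add, inner_add_left, inner_add_right, inner_add_right, e1, e2]
    ring
  -- Purity: the vector state of `P ξ` is `f` itself.
  have heq := hf.2 (key _ hp) (key _ hq) ⟨_, _, hpp, hqq, hpyth, hdec⟩
  have hE : ∀ x, ⟪P ξ - ((‖P ξ‖ ^ 2 : ℝ) : ℂ) • ξ, x⟫_ℂ = 0 :=
    cyc_dense f (g₂ := fun _ => 0) (by fun_prop) continuous_const fun a => by
      change ⟪P ξ - ((‖P ξ‖ ^ 2 : ℝ) : ℂ) • ξ, π a ξ⟫_ℂ = 0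
      have h1 := congrFun heq a
      have h2 : ⟪P ξ, π a ξ⟫_ℂ = ⟪P ξ, π a (P ξ)⟫_ℂ := by
        rw [← sub_eq_zero, ← inner_sub_right, ← hcomm]; exact hort _ _
      rw [← inner_cyc f a] at h1
      change (‖P ξ‖ ^ 2)⁻¹ • ⟪P ξ, π a (P ξ)⟫_ℂ = ⟪ξ, π a ξ⟫_ℂ at h1
      rw [inner_sub_left, inner_smul_left, h2, Complex.conj_ofReal, ← h1, ← Complex.real_smul,
        smul_inv_smul₀ hpp.ne', sub_self]
  have hEq : P ξ = ((‖P ξ‖ ^ 2 : ℝ) : ℂ) • ξ := by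
    rw [← sub_eq_zero]; exact inner_self_eq_zero.1 (hE _)
  have hξK : ξ ∈ K := by
    have hc : ((‖P ξ‖ ^ 2 : ℝ) : ℂ) ≠ 0 := Complex.ofReal_ne_zero.2 hpp.ne'
    rw [← inv_smul_smul₀ hc ξ, ← hEq]
    exact K.smul_mem _ (hPmem ξ)
  exact hq (by rw [hPK ξ hξK, sub_self])
end

open scoped CStarAlgebra

lemma exists_isometry {H : Type} [NormedAddCommGroup H] [InnerProductSpace ℂ H] {n : ℕ}
    (h : Module.rank ℂ H ≤ n) : Nonempty (H →ₗᵢ[ℂ] EuclideanSpace ℂ (Fin n)) := by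
  have hfin : FiniteDimensional ℂ H :=
    Module.rank_lt_aleph0_iff.1 (h.trans_lt (Cardinal.natCast_lt_aleph0))
  have hle : Module.finrank ℂ H ≤ n := by
    rw [← Module.finrank_eq_rank] at h
    exact_mod_cast h
  let b := stdOrthonormalBasis ℂ H
  let e := EuclideanSpace.basisFun (Fin n) ℂ
  refine ⟨(b.toBasis.constr ℂ fun i => e (Fin.castLE hle i)).isometryOfOrthonormal
    (v := b.toBasis) (by simp) ?_⟩
  have : (b.toBasis.constr ℂ fun i => e (Fin.castLE hle i)) ∘ b.toBasis =
      fun i => e (Fin.castLE hle i) := by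
    ext1 i; exact Module.Basis.constr_basis _ _ _ _
  rw [this]
  exact e.orthonormal.comp _ (Fin.castLE_injective hle)

/-- The representation `π` transported along an isometry `V` and extended by zero on the orthogonal
complement of the range: `a ↦ V π(a) V⋆`. It is non-unital unless `V` is surjective. -/
def compressHom {A : Type} [CStarAlgebra A] {H E : Type} [NormedAddCommGroup H]
    [InnerProductSpace ℂ H] [CompleteSpace H] [NormedAddCommGroup E]
    [InnerProductSpace ℂ E] [CompleteSpace E]
    (π : A →⋆ₐ[ℂ] (H →L[ℂ] H)) (V : H →ₗᵢ[ℂ] E) : A →⋆ₙₐ[ℂ] (E →L[ℂ] E) where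
  toFun a := V.toContinuousLinearMap ∘L π a ∘L V.toContinuousLinearMap.adjoint
  map_smul' c a := by ext; simp
  map_zero' := by ext; simp
  map_add' a b := by ext; simp
  map_mul' a b := by
    have h : ∀ x, V.toContinuousLinearMap.adjoint (V x) = x := fun x =>
      ext_inner_right ℂ fun y => by
        rw [ContinuousLinearMap.adjoint_inner_left]; exact V.inner_map_map x y
    ext x; simp [h]
  map_star' a := by
    simp only [map_star, ContinuousLinearMap.star_eq_adjoint, ContinuousLinearMap.adjoint_comp,
      ContinuousLinearMap.adjoint_adjoint, ContinuousLinearMap.comp_assoc]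

lemma inner_compressHom {A : Type} [CStarAlgebra A] {H E : Type} [NormedAddCommGroup H]
    [InnerProductSpace ℂ H] [CompleteSpace H] [NormedAddCommGroup E]
    [InnerProductSpace ℂ E] [CompleteSpace E]
    (π : A →⋆ₐ[ℂ] (H →L[ℂ] H)) (V : H →ₗᵢ[ℂ] E) (a : A) (v : H) :
    ⟪V v, compressHom π V a (V v)⟫_ℂ = ⟪v, π a v⟫_ℂ := by
  have h : ∀ x, V.toContinuousLinearMap.adjoint (V x) = x := fun x =>
    ext_inner_right ℂ fun y => by
      rw [ContinuousLinearMap.adjoint_inner_left]; exact V.inner_map_map x y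
  change ⟪V v, V (π a (V.toContinuousLinearMap.adjoint (V v)))⟫_ℂ = _
  rw [h, V.inner_map_map]

/-- Subtracting `f 0` expresses `cfc f` through the non-unital functional calculus, which is
preserved by non-unital homomorphisms. -/
lemma cfc_eq_cfcₙ_add {A : Type} [CStarAlgebra A]
    {f : ℝ → ℝ} (hf : ContinuousOn f (Set.Ici (0:ℝ))) {a : A} (ha : IsSelfAdjoint a)
    (hs : spectrum ℝ a ⊆ Set.Ici (0:ℝ)) :
    cfc f a = cfcₙ (fun t => f t - f 0) a + algebraMap ℝ A (f 0) := by
  have hc : ContinuousOn f (spectrum ℝ a) := hf.mono hs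
  have hq : quasispectrum ℝ a ⊆ Set.Ici 0 := by
    rw [quasispectrum_eq_spectrum_union_zero]
    exact Set.union_subset hs (by simp)
  have hc' : ContinuousOn (fun t => f t - f 0) (quasispectrum ℝ a) :=
    (hf.mono hq).sub continuousOn_const
  rw [cfcₙ_eq_cfc (hf := hc') (hf0 := sub_self _), cfc_sub f (fun _ => f 0) a hc continuousOn_const,
    cfc_const _ _ ha, sub_add_cancel]

/-- If `f` is `B`-monotone and `0 ≤ x ≤ y` in `A`, then `f(x) ≤ f(y)` holds after applying any
non-unital ⋆-homomorphism `ψ : A → B`: both `ψ x ≤ ψ y` and `(f - f 0)(ψ a) = ψ ((f - f 0)(a))`, and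
the constant `f 0` cancels in the difference. -/
lemma map_cfc_sub_nonneg {A B : Type} [CStarAlgebra A] [PartialOrder A] [StarOrderedRing A]
    [CStarAlgebra B] [PartialOrder B] [StarOrderedRing B] (ψ : A →⋆ₙₐ[ℂ] B)
    {f : ℝ → ℝ} (hf : ContinuousOn f (Set.Ici (0:ℝ))) (hB : AMonotone B f) {x y : A}
    (hx : IsSelfAdjoint x) (hy : IsSelfAdjoint y)
    (hsx : spectrum ℝ x ⊆ Set.Ici (0:ℝ)) (hsy : spectrum ℝ y ⊆ Set.Ici (0:ℝ)) (hxy : x ≤ y) :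
    0 ≤ ψ (cfc f y - cfc f x) := by
  have hmap : ∀ {a : A}, IsSelfAdjoint a → spectrum ℝ a ⊆ Set.Ici (0:ℝ) →
      IsSelfAdjoint (ψ a) ∧ spectrum ℝ (ψ a) ⊆ Set.Ici (0:ℝ) ∧
      ψ (cfcₙ (fun t => f t - f 0) a) = cfc f (ψ a) - algebraMap ℝ B (f 0) := by
    intro a ha hs
    have h0 : 0 ≤ a := (StarOrderedRing.nonneg_iff_spectrum_nonneg (R := ℝ) a ha).2 hs
    have h1 : 0 ≤ ψ a := map_nonneg ψ h0
    have h2 : IsSelfAdjoint (ψ a) := .of_nonneg h1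
    have h3 : spectrum ℝ (ψ a) ⊆ Set.Ici (0:ℝ) := fun t ht => spectrum_nonneg_of_nonneg h1 ht
    have hq : quasispectrum ℝ a ⊆ Set.Ici 0 := by
      rw [quasispectrum_eq_spectrum_union_zero]
      exact Set.union_subset hs (by simp)
    refine ⟨h2, h3, ?_⟩
    rw [cfc_eq_cfcₙ_add hf h2 h3, add_sub_cancel_right]
    exact NonUnitalStarAlgHomClass.map_cfcₙ (S := ℂ) ψ _ a
      ((hf.mono hq).sub continuousOn_const) (by simp)
      (map_continuous ψ) ha h2
  obtain ⟨x1, x2, x3⟩ := hmap hx hsx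
  obtain ⟨y1, y2, y3⟩ := hmap hy hsy
  rw [cfc_eq_cfcₙ_add hf hx hsx, cfc_eq_cfcₙ_add hf hy hsy, add_sub_add_right_eq_sub, map_sub,
    x3, y3, sub_sub_sub_cancel_right, sub_nonneg]
  exact hB _ _ x1 y1 x2 y2 (OrderHomClass.mono ψ hxy)

/-- If every irreducible representation of `A` has dimension at most `n`, then every
matrix monotone function of order `n` is `A`-monotone: `P_n ⊆ P_A`. -/
theorem stmt4 (A : Type) [CStarAlgebra A] [PartialOrder A] [StarOrderedRing A] (n : ℕ)
    (hdim : ∀ (H : Type) [NormedAddCommGroup H] [InnerProductSpace ℂ H] [CompleteSpace H]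
      (π : A →⋆ₐ[ℂ] (H →L[ℂ] H)), IsIrreducibleRep π → Module.rank ℂ H ≤ n)
    (f : ℝ → ℝ) (hf : ContinuousOn f (Set.Ici (0:ℝ))) (hn : MatrixMonotone n f) :
    AMonotone A f := by
  intro x y hx hy hsx hsy hxy
  rw [← sub_nonneg]
  refine nonneg_of_pure ((cfc_predicate f y).sub (cfc_predicate f x)) fun φ hφ => ?_
  let g : A →ₚ[ℂ] ℂ := PositiveLinearMap.mk₀
    { toFun := φ, map_add' := hφ.1.map_add, map_smul' := hφ.1.map_smul } hφ.1.nonneg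
  obtain ⟨V⟩ := exists_isometry (hdim g.GNS g.gnsStarAlgHom (irreducible_of_pure g hφ))
  have hpos := map_cfc_sub_nonneg (compressHom g.gnsStarAlgHom V) hf hn hx hy hsx hsy hxy
  rw [ContinuousLinearMap.nonneg_iff_isPositive] at hpos
  have h := hpos.inner_nonneg_right (V (cyc g))
  rw [inner_compressHom, inner_cyc] at h
  exact (Complex.nonneg_iff.1 h).1
end
end

section
/- Let A be a unital C*-algebra with an irreducible representation π on an infinite-dimensional Hilbert space H. Then every A-monotone continuous function on [0,∞) is operator monotone: P_A = P_∞. -/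
/-!
Fix `0 ≤ x ≤ y` in `M_n` and an isometry `V : ℂⁿ → H`, which exists because `H` is
infinite-dimensional. Suppose there are norm-bounded sequences `0 ≤ aₖ ≤ bₖ` in `A` with
`π(aₖ) V → V x` and `π(bₖ) V → V y`. Then `V⋆ π(f(aₖ)) V → f(x)` and `V⋆ π(f(bₖ)) V → f(y)`
(`tendsto_cfc`), and `f(aₖ) ≤ f(bₖ)` gives `f(x) ≤ f(y)` in the limit.

Taking `bₖ = aₖ + dₖ` with `π(dₖ) V → V (y - x)`, it suffices to approximate one positive operator
at a time (`approximable_of_nonneg`). Such an operator is a sum of positive rank-one operators, so it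
suffices to approximate projections on `H` by positive contractions (`dense_projection`). Thus the
exact form of Kadison transitivity is not needed, only the following case of Kaplansky density.
Schur's lemma (`schur`) and the double commutant argument (`dense_weak`) give weak density of `π(A)`
in `B(H)`; Hahn–Banach turns this into strong density of the self-adjoint part
(`dense_selfAdjoint`); and truncating the spectrum to `[0, 1]` makes an approximant of a projection
a positive contraction without worsening the approximation.
-/

noncomputable section

open scoped InnerProductSpace
open Filter Topology

/-! ### Schur's lemma and the double commutant -/

section
variable {A : Type} [CStarAlgebra A] {H : Type} [NormedAddCommGroup H]
    [InnerProductSpace ℂ H] [CompleteSpace H] {π : A →⋆ₐ[ℂ] (H →L[ℂ] H)}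

/-- Schur's lemma for a self-adjoint `T`: if `T` had two spectral points, bump functions with disjoint
supports around them would give nonzero operators `G₁`, `G₂` commuting with `π(A)` and satisfying
`G₁ G₂ = 0`, so that `ker G₁` would be a proper nontrivial closed invariant subspace. -/
theorem schur_selfAdjoint [Nontrivial H] (hπ : IsIrreducibleRep π) (T : H →L[ℂ] H)
    (hT : IsSelfAdjoint T) (hc : ∀ a, Commute (π a) T) : ∃ c : ℂ, T = c • 1 := by
  obtain ⟨l, hl⟩ := ContinuousFunctionalCalculus.spectrum_nonempty (R := ℝ) T hT
  suffices hs : spectrum ℝ T ⊆ {l} by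
    refine ⟨(l : ℂ), ?_⟩
    have h := CFC.eq_algebraMap_of_spectrum_subset_singleton T l hs hT
    rw [h, Algebra.algebraMap_eq_smul_one]
    ext x
    simp
  intro m hm
  by_contra hne
  have hr : 0 < |l - m| / 2 := half_pos (abs_pos.mpr (sub_ne_zero.mpr fun h => hne h.symm))
  set r := |l - m| / 2 with hr_def
  -- tent functions at `l` and `m` with disjoint supports
  let g : ℝ → ℝ → ℝ := fun p t => max 0 (r - |t - p|)
  have hgc : ∀ p, Continuous (g p) := fun p => by fun_prop
  have hg0 : ∀ p ∈ spectrum ℝ T, cfc (g p) T ≠ 0 := by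
    intro p hp h0
    have h1 : g p p ∈ spectrum ℝ (cfc (g p) T) := by
      rw [cfc_map_spectrum (g p) T hT (hgc p).continuousOn]
      exact ⟨p, hp, rfl⟩
    rw [h0, spectrum.zero_eq] at h1
    simp [g] at h1
    linarith
  have hmul : cfc (g l) T * cfc (g m) T = 0 := by
    rw [← cfc_mul (g l) (g m) T (hgc l).continuousOn (hgc m).continuousOn]
    have : (fun x => g l x * g m x) = fun _ => (0 : ℝ) := by
      funext t
      by_contra hne0
      have h1 : 0 < r - |t - l| := by
        by_contra h
        exact hne0 (by simp [g, max_eq_left (not_lt.mp h)])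
      have h2 : 0 < r - |t - m| := by
        by_contra h
        exact hne0 (by simp [g, max_eq_left (not_lt.mp h)])
      have h3 := abs_sub_le l t m
      rw [abs_sub_comm l t] at h3
      linarith
    rw [this, cfc_const_zero]
  have hcomm : ∀ a, Commute (π a) (cfc (g l) T) := fun a => by
    have := (hT.commute_cfc (hc a).symm (g l)).symm
    exact this
  rcases hπ (LinearMap.ker ((cfc (g l) T : H →L[ℂ] H) : H →ₗ[ℂ] H))
    (ContinuousLinearMap.isClosed_ker (cfc (g l) T : H →L[ℂ] H)) (fun a x hx => by
      have h1 := congrArg (fun S : H →L[ℂ] H => S x) (hcomm a).eq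
      simp only [mul_apply_eq_comp] at h1
      change cfc (g l) T x = 0 at hx
      change cfc (g l) T (π a x) = 0
      rw [← h1, hx, map_zero]) with h | h
  · refine hg0 m hm ?_
    ext x
    have h1 : cfc (g m) T x ∈ LinearMap.ker ((cfc (g l) T : H →L[ℂ] H) : H →ₗ[ℂ] H) := by
      have h1 := congrArg (fun S : H →L[ℂ] H => S x) hmul
      simpa using h1
    rw [h] at h1
    simpa using h1
  · refine hg0 l hl ?_
    ext x
    have h1 : x ∈ LinearMap.ker ((cfc (g l) T : H →L[ℂ] H) : H →ₗ[ℂ] H) := by rw [h]; trivial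
    simpa using h1

open ComplexStarModule in
/-- Schur's lemma: an operator commuting with `π(A)` is a scalar, by the self-adjoint case applied to
its real and imaginary parts. -/
theorem schur [Nontrivial H] (hπ : IsIrreducibleRep π) (T : H →L[ℂ] H)
    (hc : ∀ a, Commute (π a) T) : ∃ c : ℂ, T = c • 1 := by
  have hc' : ∀ a, Commute (π a) (star T) := fun a => by
    have h := (hc (star a)).star_star
    rwa [map_star, star_star] at h
  obtain ⟨c, h1⟩ := schur_selfAdjoint hπ (ℜ T : H →L[ℂ] H) (ℜ T).2 (fun a => by
    rw [realPart_apply_coe]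
    exact ((hc a).add_right (hc' a)).smul_right _)
  obtain ⟨d, h2⟩ := schur_selfAdjoint hπ (ℑ T : H →L[ℂ] H) (ℑ T).2 (fun a => by
    rw [imaginaryPart_apply_coe]
    exact (((hc a).sub_right (hc' a)).smul_right _).smul_right _)
  refine ⟨c + Complex.I * d, ?_⟩
  rw [← realPart_add_I_smul_imaginaryPart T, h1, h2, smul_smul, add_smul]

/-- Weak density of `π(A)` in `B(H)`, by von Neumann's double commutant argument: the projection onto
the orthogonal complement of `{(π(a) wᵢ)ᵢ}` in the Hilbert sum `⨁ᵢ H` commutes with the diagonal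
action of `A`, so it is a matrix of scalars by Schur's lemma and commutes with every diagonal
operator `T ⊕ ⋯ ⊕ T`. -/
theorem dense_weak [Nontrivial H] (hπ : IsIrreducibleRep π) {ι : Type} [Fintype ι]
    (ξ w : ι → H) (h0 : ∀ a, ∑ i, ⟪ξ i, π a (w i)⟫_ℂ = 0) (T : H →L[ℂ] H) :
    ∑ i, ⟪ξ i, T (w i)⟫_ℂ = 0 := by
  classical
  let K₀ : Submodule ℂ (PiLp 2 fun _ : ι => H) :=
    { carrier := Set.range fun a : A => WithLp.toLp 2 fun i => π a (w i)
      add_mem' := by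
        rintro _ _ ⟨a, rfl⟩ ⟨b, rfl⟩
        exact ⟨a + b, by ext i; simp⟩
      zero_mem' := ⟨0, by ext i; simp⟩
      smul_mem' := by
        rintro c _ ⟨a, rfl⟩
        exact ⟨c • a, by ext i; simp⟩ }
  let D : A → (PiLp 2 fun _ : ι => H) → PiLp 2 fun _ : ι => H :=
    fun a x => WithLp.toLp 2 fun i => π a (x i)
  have hDi : ∀ a x y, ⟪x, D a y⟫_ℂ = ⟪D (star a) x, y⟫_ℂ := by
    intro a x y
    simp only [D, PiLp.inner_apply, map_star]
    refine Finset.sum_congr rfl fun i _ => ?_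
    rw [ContinuousLinearMap.star_eq_adjoint, ContinuousLinearMap.adjoint_inner_left]
  have hD0 : ∀ a, ∀ x ∈ K₀, D a x ∈ K₀ := by
    rintro a _ ⟨b, rfl⟩
    exact ⟨a * b, by ext i; simp [D]⟩
  have hD1 : ∀ a, ∀ x ∈ K₀ᗮ, D a x ∈ K₀ᗮ := by
    intro a x hx
    rw [Submodule.mem_orthogonal'] at hx ⊢
    intro u hu
    have := hDi (star a) x u
    rw [star_star] at this
    rw [← this]
    exact hx _ (hD0 _ u hu)
  have hD2 : ∀ a, ∀ x ∈ K₀ᗮᗮ, D a x ∈ K₀ᗮᗮ := by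
    intro a x hx
    rw [Submodule.mem_orthogonal'] at hx ⊢
    intro u hu
    have := hDi (star a) x u
    rw [star_star] at this
    rw [← this]
    exact hx _ (hD1 _ u hu)
  -- `K₀` need not be closed, but `K₀ᗮ` is, so it carries an orthogonal projection
  let K₁ : Submodule ℂ (PiLp 2 fun _ : ι => H) := K₀ᗮ
  have : CompleteSpace K₁ := (Submodule.isClosed_orthogonal K₀).completeSpace_coe
  have : K₁.HasOrthogonalProjection := Submodule.HasOrthogonalProjection.ofCompleteSpace K₁
  let Q := K₁.starProjection
  have hDadd : ∀ a x y, D a (x + y) = D a x + D a y := fun a x y => by ext i; simp [D]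
  have hQD : ∀ a x, Q (D a x) = D a (Q x) := by
    intro a x
    refine Submodule.eq_starProjection_of_mem_orthogonal'
      (z := D a (x - Q x)) (hD1 a _ (Submodule.starProjection_apply_mem _ _))
      (hD2 a _ (Submodule.sub_starProjection_mem_orthogonal _)) ?_
    rw [← hDadd]; simp
  have hent : ∀ i j, ∃ c : ℂ, ∀ x, (Q (PiLp.single 2 j x)) i = c • x := by
    intro i j
    let S : H →L[ℂ] H := (PiLp.proj 2 (𝕜 := ℂ) (fun _ : ι => H) i) ∘L Q ∘L
      ((PiLp.continuousLinearEquiv 2 ℂ (fun _ : ι => H)).symm :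
        (ι → H) →L[ℂ] PiLp 2 fun _ : ι => H) ∘L (ContinuousLinearMap.single ℂ (fun _ : ι => H) j)
    have hS : ∀ x, S x = (Q (PiLp.single 2 j x)) i := fun x => rfl
    obtain ⟨c, hc⟩ := schur hπ S (fun a => by
      ext x
      have h1 : PiLp.single 2 j (π a x) = D a (PiLp.single 2 j x) := by
        ext k
        rcases eq_or_ne k j with rfl | hk
        · simp [D]
        · simp [D, hk]
      simp only [mul_apply_eq_comp, hS]
      rw [h1, hQD])
    exact ⟨c, fun x => by rw [← hS, hc]; simp⟩
  choose c hc using hent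
  have hQ : ∀ (x : ι → H) i, Q (WithLp.toLp 2 x) i = ∑ j, c i j • x j := by
    intro x i
    have : WithLp.toLp 2 x = ∑ j, PiLp.single 2 j (x j) := by
      ext k
      simp [Finset.sum_apply, Pi.single_apply]
    rw [this, map_sum]
    simp [hc]
  have hw : Q (WithLp.toLp 2 w) = 0 := by
    rw [Submodule.starProjection_apply_eq_zero_iff]
    refine Submodule.le_orthogonal_orthogonal _ ⟨1, ?_⟩
    ext i; simp
  have hTw : Q (WithLp.toLp 2 fun i => T (w i)) = 0 := by
    ext i
    rw [hQ]
    have h1 := hQ w i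
    rw [hw] at h1
    have h2 := congrArg T h1.symm
    simpa using h2
  have hξ : WithLp.toLp 2 ξ ∈ K₀ᗮ := by
    rw [Submodule.mem_orthogonal']
    rintro _ ⟨a, rfl⟩
    simpa [PiLp.inner_apply] using h0 a
  have h3 : (WithLp.toLp 2 fun i => T (w i)) ∈ K₀ᗮᗮ := by
    rwa [← Submodule.starProjection_apply_eq_zero_iff]
  have h4 := (Submodule.mem_orthogonal _ _).1 h3 _ hξ
  simpa [PiLp.inner_apply] using h4


/-! ### Bounded approximation in the strong topology -/

/-- Follows from `g₁(h)² ≤ g₂(h)²`. -/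
theorem norm_cfc_apply_le (h : H →L[ℂ] H) (hh : IsSelfAdjoint h) {g₁ g₂ : ℝ → ℝ}
    (h₁ : Continuous g₁) (h₂ : Continuous g₂) (hle : ∀ t, |g₁ t| ≤ |g₂ t|) (u : H) :
    ‖cfc g₁ h u‖ ≤ ‖cfc g₂ h u‖ := by
  have key : ∀ g : ℝ → ℝ, Continuous g →
      ‖cfc g h u‖ ^ 2 = RCLike.re ⟪u, cfc (fun t => g t * g t) h u⟫_ℂ := by
    intro g hg
    have hs : IsSelfAdjoint (cfc g h) := cfc_predicate g h
    rw [cfc_mul g g h hg.continuousOn hg.continuousOn, mul_apply_eq_comp, ← inner_self_eq_norm_sq (𝕜 := ℂ)]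
    conv_lhs => rw [← ContinuousLinearMap.adjoint_inner_right,
      ← ContinuousLinearMap.star_eq_adjoint, hs.star_eq]
  have hm : cfc (fun t => g₁ t * g₁ t) h ≤ cfc (fun t => g₂ t * g₂ t) h :=
    cfc_mono (fun t _ => by simpa only [← pow_two] using sq_le_sq.mpr (hle t))
      (h₁.mul h₁).continuousOn (h₂.mul h₂).continuousOn
  rw [ContinuousLinearMap.le_def] at hm
  have h3 := hm.re_inner_nonneg_right u
  rw [sub_apply, inner_sub_right, map_sub, ← key g₂ h₂, ← key g₁ h₁] at h3
  exact abs_le_of_sq_le_sq' (by linarith) (norm_nonneg _) |>.2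

/-- Self-adjoint elements of `A` are strongly dense in self-adjoint operators. A real Hahn–Banach
separation would give `ξᵢ` with `Re ∑ ⟪ξᵢ, T wᵢ⟫ > 0` but `Re ∑ ⟪ξᵢ, π(h) wᵢ⟫ = 0` for all
self-adjoint `h`; then `∑ (⟪ξᵢ, π(a) wᵢ⟫ + ⟪wᵢ, π(a) ξᵢ⟫) = 0` for all `a`, and weak density extends
this to `T`, where the real part of the sum is `2 Re ∑ ⟪ξᵢ, T wᵢ⟫`. -/
theorem dense_selfAdjoint [Nontrivial H] (hπ : IsIrreducibleRep π) {ι : Type} [Fintype ι]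
    (w : ι → H) (T : H →L[ℂ] H) (hT : IsSelfAdjoint T) {ε : ℝ} (hε : 0 < ε) :
    ∃ h : A, IsSelfAdjoint h ∧ ∀ i, ‖π h (w i) - T (w i)‖ < ε := by
  classical
  let S : Set (ι → H) := {x | ∃ h : A, IsSelfAdjoint h ∧ x = fun i => π h (w i)}
  have hSc : Convex ℝ S := by
    rintro _ ⟨a, ha, rfl⟩ _ ⟨b, hb, rfl⟩ s t - - -
    refine ⟨s • a + t • b, ((IsSelfAdjoint.all s).smul ha).add ((IsSelfAdjoint.all t).smul hb), ?_⟩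
    funext i
    have e : ∀ (s : ℝ) (a : A), s • a = (s : ℂ) • a := fun s a => (Complex.coe_smul s a).symm
    simp only [e, map_add, map_smul]
    simp
  have hmem : (fun i => T (w i)) ∈ closure S := by
    by_contra hn
    obtain ⟨φ, u, h1, h2⟩ := RCLike.geometric_hahn_banach_closed_point (𝕜 := ℂ)
      hSc.closure isClosed_closure hn
    let ξ : ι → H := fun i => (InnerProductSpace.toDual ℂ H).symm
      (φ ∘L ContinuousLinearMap.single ℂ (fun _ : ι => H) i)
    have hξ : ∀ x : ι → H, φ x = ∑ i, ⟪ξ i, x i⟫_ℂ := by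
      intro x
      conv_lhs => rw [← Finset.univ_sum_single x, map_sum]
      exact Finset.sum_congr rfl fun i _ => by
        simp [ξ, InnerProductSpace.toDual_symm_apply]
    have hu : 0 < u := by
      have := h1 0 (subset_closure ⟨0, .zero _, by ext i; simp⟩)
      simpa using this
    have hz : ∀ h : A, IsSelfAdjoint h → RCLike.re (φ fun i => π h (w i)) = 0 := by
      intro h hh
      by_contra hne
      have h3 := h1 (fun i => π (((u / RCLike.re (φ fun i => π h (w i)) : ℝ) : ℂ) • h) (w i))
        (subset_closure ⟨_, by
          rw [Complex.coe_smul]; exact (IsSelfAdjoint.all _).smul hh, rfl⟩)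
      have h4 : (fun i => π (((u / RCLike.re (φ fun i => π h (w i)) : ℝ) : ℂ) • h) (w i)) =
          ((u / RCLike.re (φ fun i => π h (w i)) : ℝ) : ℂ) • fun i => π h (w i) := by
        ext i; simp
      rw [h4, map_smul, smul_eq_mul] at h3
      have h5 : ∀ (r : ℝ) (z : ℂ), RCLike.re ((r : ℂ) * z) = r * RCLike.re z := fun r z => by
        simp
      rw [h5, div_mul_cancel₀ _ hne] at h3
      exact lt_irrefl _ h3
    -- `Re ψ(π(a)) = Re φ(π(a + a⋆) w) = 0`; replacing `a` by `i a` also kills the imaginary part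
    let ψ : (H →L[ℂ] H) → ℂ := fun X => ∑ i, (⟪ξ i, X (w i)⟫_ℂ + ⟪w i, X (ξ i)⟫_ℂ)
    have hψre : ∀ X : H →L[ℂ] H,
        RCLike.re (ψ X) = RCLike.re (φ fun i => (X + star X) (w i)) := by
      intro X
      rw [hξ]
      simp only [ψ, map_sum, map_add, add_apply, inner_add_right]
      refine Finset.sum_congr rfl fun i _ => ?_
      congr 1
      rw [ContinuousLinearMap.star_eq_adjoint, ContinuousLinearMap.adjoint_inner_right,
        inner_re_symm]
    have hψ0 : ∀ a, RCLike.re (ψ (π a)) = 0 := by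
      intro a
      rw [hψre, ← map_star, ← map_add]
      exact hz _ (IsSelfAdjoint.add_star_self a)
    have hψ : ∀ a, ψ (π a) = 0 := by
      intro a
      have h6 := hψ0 (Complex.I • a)
      have h7 : ψ (π (Complex.I • a)) = Complex.I * ψ (π a) := by
        simp [ψ, Finset.mul_sum, mul_add]
      rw [h7] at h6
      refine Complex.ext (hψ0 a) ?_
      simpa using h6
    have h8 := dense_weak hπ (Sum.elim ξ w) (Sum.elim w ξ) (fun a => by
      rw [Fintype.sum_sum_type, ← hψ a]
      simp [ψ, Finset.sum_add_distrib]) T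
    have h9 : ψ T = 0 := by
      rw [← h8, Fintype.sum_sum_type]
      simp [ψ, Finset.sum_add_distrib]
    have h10 := hψre T
    rw [h9, hT.star_eq] at h10
    have h11 : (fun i => (T + T) (w i)) = (fun i => T (w i)) + fun i => T (w i) := by
      ext i; simp
    rw [h11, map_add, map_add, map_zero] at h10
    linarith
  obtain ⟨_, ⟨h, hh, rfl⟩, hd⟩ := Metric.mem_closure_iff.1 hmem ε hε
  refine ⟨h, hh, fun i => ?_⟩
  rw [dist_comm, dist_eq_norm] at hd
  exact (norm_le_pi_norm (_ : ι → H) i).trans_lt hd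

theorem norm_rep_le (a : A) : ‖π a‖ ≤ ‖a‖ := NonUnitalStarAlgHom.norm_apply_le π a

theorem cont_rep : Continuous π :=
  AddMonoidHomClass.continuous_of_bound π 1 fun a => by simpa using norm_rep_le a

theorem map_cfc_rep (a : A) (ha : IsSelfAdjoint a) (g : ℝ → ℝ)
    (hg : ContinuousOn g (spectrum ℝ a)) : π (cfc g a) = cfc g (π a) :=
  StarAlgHomClass.map_cfc π g a hg cont_rep ha (ha.map π)

/-- Kaplansky density for a projection `P`. If `π(h)` almost fixes `P wᵢ` and almost kills
`(1 - P) wᵢ`, then so does its truncation `g(h)` with `g(t) = max 0 (min t 1)`, because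
`|g(t) - 1| ≤ |t - 1|` and `|g(t)| ≤ |t|`. -/
theorem dense_projection [PartialOrder A] [StarOrderedRing A] [Nontrivial H]
    (hπ : IsIrreducibleRep π) {ι : Type} [Fintype ι]
    (w : ι → H) (P : H →L[ℂ] H) (hP : IsStarProjection P) {ε : ℝ} (hε : 0 < ε) :
    ∃ a : A, 0 ≤ a ∧ ‖a‖ ≤ 1 ∧ ∀ i, ‖π a (w i) - P (w i)‖ < ε := by
  obtain ⟨h, hh, hd⟩ := dense_selfAdjoint hπ
    (Sum.elim (fun i => P (w i)) (fun i => w i - P (w i))) P hP.isSelfAdjoint (half_pos hε)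
  let g : ℝ → ℝ := fun t => max 0 (min t 1)
  have hg : Continuous g := by fun_prop
  have hPP : ∀ x, P (P x) = P x := fun x => by
    rw [← mul_apply_eq_comp, hP.isIdempotentElem.eq]
  have hπh : IsSelfAdjoint (π h) := hh.map π
  refine ⟨cfc g h, cfc_nonneg fun t _ => le_max_left _ _, norm_cfc_le zero_le_one fun t _ => ?_,
    fun i => ?_⟩
  · rw [Real.norm_eq_abs, abs_of_nonneg (le_max_left _ _)]
    exact max_le zero_le_one (min_le_right _ _)
  · rw [map_cfc_rep h hh g hg.continuousOn]
    have e1 := hd (Sum.inl i)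
    have e2 := hd (Sum.inr i)
    simp only [Sum.elim_inl, Sum.elim_inr, map_sub, hPP, sub_self, sub_zero] at e1 e2
    have f1 : ‖cfc g (π h) (P (w i)) - P (w i)‖ ≤ ‖π h (P (w i)) - P (w i)‖ := by
      have := norm_cfc_apply_le (π h) hπh (g₁ := fun t => g t - 1) (g₂ := fun t => t - 1)
        (by fun_prop) (by fun_prop) (fun t => by
          simp only [g]
          rcases le_total t 0 with h0 | h0 <;> rcases le_total t 1 with h1 | h1
          · rw [min_eq_left h1, max_eq_left h0, abs_of_nonpos (by linarith),
              abs_of_nonpos (by linarith)]; linarith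
          · linarith
          · rw [min_eq_left h1, max_eq_right h0]
          · rw [min_eq_right h1, max_eq_right zero_le_one, sub_self, abs_zero]
            exact abs_nonneg _) (P (w i))
      rw [cfc_sub g (fun _ => 1) (π h) hg.continuousOn, cfc_sub (fun t : ℝ => t) (fun _ => 1) (π h),
        cfc_const_one ℝ (π h), cfc_id' ℝ (π h)] at this
      simpa using this
    have f2 : ‖cfc g (π h) (w i - P (w i))‖ ≤ ‖π h (w i - P (w i))‖ := by
      have := norm_cfc_apply_le (π h) hπh (g₁ := g) (g₂ := fun t => t)
        (by fun_prop) (by fun_prop) (fun t => by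
          simp only [g]
          rcases le_total t 0 with h0 | h0 <;> rcases le_total t 1 with h1 | h1
          · rw [min_eq_left h1, max_eq_left h0, abs_zero]; exact abs_nonneg _
          · linarith
          · rw [min_eq_left h1, max_eq_right h0]
          · rw [min_eq_right h1, max_eq_right zero_le_one, abs_one, abs_of_nonneg h0]
            exact h1) (w i - P (w i))
      rwa [cfc_id' ℝ (π h)] at this
    have e3 : cfc g (π h) (w i) - P (w i) =
        (cfc g (π h) (P (w i)) - P (w i)) + cfc g (π h) (w i - P (w i)) := by
      rw [map_sub]; abel
    rw [e3]
    rw [← map_sub] at e2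
    calc _ ≤ _ := norm_add_le _ _
      _ < ε := by linarith

/-! ### Approximating a compression -/

variable {E : Type} [NormedAddCommGroup E] [InnerProductSpace ℂ E] [FiniteDimensional ℂ E]

/-- The operator `z` on `E`, transported to `H` along `V`, is the limit of a norm-bounded sequence of
positive elements of `A`. Since `E` is finite-dimensional, strong convergence on the range of `V`
is encoded as norm convergence `π(aₖ) V → V z`. -/
def Approximable [PartialOrder A] (π : A →⋆ₐ[ℂ] (H →L[ℂ] H)) (V : E →L[ℂ] H)
    (z : E →L[ℂ] E) : Prop :=
  ∃ (R : ℝ) (a : ℕ → A), (∀ k, 0 ≤ a k ∧ ‖a k‖ ≤ R) ∧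
    Tendsto (fun k => π (a k) ∘L V) atTop (𝓝 (V ∘L z))

theorem tendsto_of_basis {ι : Type} [Fintype ι] (e : OrthonormalBasis ι ℂ E)
    (F : ℕ → E →L[ℂ] H) (G : E →L[ℂ] H)
    (h : ∀ j, Tendsto (fun k => F k (e j)) atTop (𝓝 (G (e j)))) : Tendsto F atTop (𝓝 G) := by
  have key : ∀ L : E →L[ℂ] H, L = ∑ j, (innerSL ℂ (e j)).smulRight (L (e j)) := by
    intro L
    ext x
    conv_lhs => rw [← e.sum_repr' x, map_sum]
    simp
  rw [key G]
  have : F = fun k => ∑ j, (innerSL ℂ (e j)).smulRight (F k (e j)) := funext fun k => key _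
  rw [this]
  refine tendsto_finsetSum _ fun j _ => ?_
  exact ((ContinuousLinearMap.smulRightL ℂ E H (innerSL ℂ (e j))).continuous.tendsto _).comp (h j)

/-- `V |u⟩⟨u| = ‖V u‖² P V`, where `P` is the projection onto the line spanned by `V u`. -/
theorem approximable_rankOne [PartialOrder A] [StarOrderedRing A] [Nontrivial H]
    (hπ : IsIrreducibleRep π) (V : E →ₗᵢ[ℂ] H) (u : E) :
    Approximable π V.toContinuousLinearMap (InnerProductSpace.rankOne ℂ u u) := by
  let e := stdOrthonormalBasis ℂ E
  let P : H →L[ℂ] H := (ℂ ∙ V u).starProjection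
  have hP : IsStarProjection P := isStarProjection_starProjection
  choose a ha0 ha1 had using fun k : ℕ => dense_projection hπ (fun j => V (e j)) P hP
    (Nat.one_div_pos_of_nat (α := ℝ) (n := k))
  have hlim : ∀ j, Tendsto (fun k => π (a k) (V (e j))) atTop (𝓝 (P (V (e j)))) := by
    intro j
    rw [tendsto_iff_norm_sub_tendsto_zero]
    exact squeeze_zero (fun _ => norm_nonneg _) (fun k => (had k j).le)
      tendsto_one_div_add_atTop_nhds_zero_nat
  refine ⟨‖V u‖ ^ 2, fun k => (‖V u‖ ^ 2) • a k, fun k => ⟨smul_nonneg (by positivity) (ha0 k), ?_⟩,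
    ?_⟩
  · rw [norm_smul, Real.norm_of_nonneg (by positivity)]
    exact mul_le_of_le_one_right (by positivity) (ha1 k)
  · refine tendsto_of_basis e _ _ fun j => ?_
    have h1 := (hlim j).const_smul ((‖V u‖ ^ 2 : ℝ) : ℂ)
    have h2 : ((‖V u‖ ^ 2 : ℝ) : ℂ) • P (V (e j)) =
        (V.toContinuousLinearMap ∘L InnerProductSpace.rankOne ℂ u u) (e j) := by
      have := Submodule.smul_starProjection_singleton ℂ (v := V u) (V (e j))
      simpa [P] using this
    rw [← h2]
    refine h1.congr fun k => ?_
    change _ = π ((‖V u‖ ^ 2) • a k) (V (e j))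
    rw [← Complex.coe_smul (‖V u‖ ^ 2) (a k), map_smul]
    rfl

theorem approximable_of_nonneg [PartialOrder A] [StarOrderedRing A] [Nontrivial H]
    (hπ : IsIrreducibleRep π) (V : E →ₗᵢ[ℂ] H) (z : E →L[ℂ] E) (hz : z.IsPositive) :
    Approximable π V.toContinuousLinearMap z := by
  obtain ⟨m, u, rfl⟩ := ContinuousLinearMap.isPositive_iff_eq_sum_rankOne.1 hz
  choose R a ha hlim using fun i => approximable_rankOne hπ V (u i)
  refine ⟨∑ i, R i, fun k => ∑ i, a i k, fun k => ⟨Finset.sum_nonneg fun i _ => (ha i k).1,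
    (norm_sum_le _ _).trans (Finset.sum_le_sum fun i _ => (ha i k).2)⟩, ?_⟩
  have h1 := tendsto_finsetSum Finset.univ fun i _ => hlim i
  simp only [map_sum]
  convert h1 using 2
  · ext; simp
  · ext; simp

theorem tendsto_pow (V : E →L[ℂ] H) (x : E →L[ℂ] E) (a : ℕ → H →L[ℂ] H) (R : ℝ)
    (hR : ∀ k, ‖a k‖ ≤ R) (h : Tendsto (fun k => a k ∘L V) atTop (𝓝 (V ∘L x))) (m : ℕ) :
    Tendsto (fun k => (a k ^ m) ∘L V) atTop (𝓝 (V ∘L (x ^ m))) := by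
  induction m with
  | zero =>
    have h1 : ∀ k, (a k ^ 0) ∘L V = V := fun k => by ext; simp
    have h2 : V ∘L (x ^ 0) = V := by ext; simp
    simp only [h1, h2]
    exact tendsto_const_nhds
  | succ m ih =>
    rw [tendsto_iff_norm_sub_tendsto_zero] at h ih ⊢
    have hb : Tendsto (fun k => R * ‖(a k ^ m) ∘L V - V ∘L (x ^ m)‖ +
        ‖a k ∘L V - V ∘L x‖ * ‖x ^ m‖) atTop (𝓝 0) := by
      simpa using (ih.const_mul R).add (h.mul_const ‖x ^ m‖)
    refine squeeze_zero (fun _ => norm_nonneg _) (fun k => ?_) hb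
    have e : (a k ^ (m + 1)) ∘L V - V ∘L (x ^ (m + 1)) =
        a k ∘L ((a k ^ m) ∘L V - V ∘L (x ^ m)) + (a k ∘L V - V ∘L x) ∘L (x ^ m) := by
      ext v
      simp [pow_succ']
    rw [e]
    refine (norm_add_le _ _).trans (add_le_add ?_ (ContinuousLinearMap.opNorm_comp_le _ _))
    exact (ContinuousLinearMap.opNorm_comp_le _ _).trans
      (mul_le_mul_of_nonneg_right (hR k) (norm_nonneg _))

open Polynomial in
theorem tendsto_aeval (V : E →L[ℂ] H) (x : E →L[ℂ] E) (a : ℕ → H →L[ℂ] H) (R : ℝ)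
    (hR : ∀ k, ‖a k‖ ≤ R) (h : Tendsto (fun k => a k ∘L V) atTop (𝓝 (V ∘L x))) (p : ℝ[X]) :
    Tendsto (fun k => (aeval (a k) p) ∘L V) atTop (𝓝 (V ∘L (aeval x p))) := by
  induction p using Polynomial.induction_on' with
  | add p q hp hq =>
    convert hp.add hq using 2
    · ext; simp
    · ext; simp
  | monomial m c =>
    convert (tendsto_pow V x a R hR h m).const_smul (c : ℂ) using 2
    · ext; simp [aeval_monomial, Algebra.algebraMap_eq_smul_one]
    · ext; simp [aeval_monomial, Algebra.algebraMap_eq_smul_one]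

theorem norm_cfc_sub_aeval_le {B : Type} [CStarAlgebra B] (b : B) (hb : IsSelfAdjoint b)
    {R δ : ℝ} (hδ : 0 ≤ δ) (hs : spectrum ℝ b ⊆ Set.Icc 0 R) {f : ℝ → ℝ}
    (hf : ContinuousOn f (Set.Icc 0 R)) (p : Polynomial ℝ)
    (hp : ∀ t ∈ Set.Icc 0 R, |p.eval t - f t| < δ) :
    ‖Polynomial.aeval b p - cfc f b‖ ≤ δ := by
  rw [← cfc_polynomial p b hb, ← cfc_sub p.eval f b p.continuous.continuousOn (hf.mono hs)]
  exact norm_cfc_le hδ fun t ht => (hp t (hs ht)).le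

/-- The functional calculus is continuous along bounded sequences: true for polynomials, and the
uniform bound on the spectra allows approximation of `f` by polynomials. -/
theorem tendsto_cfc (V : E →L[ℂ] H) (x : E →L[ℂ] E) (hx : IsSelfAdjoint x) (R : ℝ)
    (hxR : spectrum ℝ x ⊆ Set.Icc 0 R) (a : ℕ → H →L[ℂ] H) (ha : ∀ k, IsSelfAdjoint (a k))
    (haR : ∀ k, spectrum ℝ (a k) ⊆ Set.Icc 0 R) (hR : ∀ k, ‖a k‖ ≤ R)
    (h : Tendsto (fun k => a k ∘L V) atTop (𝓝 (V ∘L x))) (f : ℝ → ℝ)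
    (hf : ContinuousOn f (Set.Icc 0 R)) :
    Tendsto (fun k => cfc f (a k) ∘L V) atTop (𝓝 (V ∘L cfc f x)) := by
  rw [Metric.tendsto_atTop]
  intro ε hε
  set δ := ε / (3 * (‖V‖ + 1)) with hδ_def
  have hδ : 0 < δ := by positivity
  have hδV : δ * ‖V‖ < ε / 3 := by
    have : δ * (‖V‖ + 1) = ε / 3 := by rw [hδ_def]; field_simp
    linarith
  obtain ⟨p, hp⟩ := exists_polynomial_near_of_continuousOn 0 R f hf δ hδ
  obtain ⟨N, hN⟩ := Metric.tendsto_atTop.1 (tendsto_aeval V x a R hR h p) (ε / 3) (by positivity)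
  refine ⟨N, fun k hk => ?_⟩
  have h1 := hN k hk
  rw [dist_eq_norm] at h1 ⊢
  have h2 := norm_cfc_sub_aeval_le (a k) (ha k) hδ.le (haR k) hf p hp
  have h3 := norm_cfc_sub_aeval_le x hx hδ.le hxR hf p hp
  have e : cfc f (a k) ∘L V - V ∘L cfc f x =
      ((Polynomial.aeval (a k) p) ∘L V - V ∘L (Polynomial.aeval x p)) -
      (Polynomial.aeval (a k) p - cfc f (a k)) ∘L V +
      V ∘L (Polynomial.aeval x p - cfc f x) := by
    ext v; simp
  rw [e]
  have h4 := (ContinuousLinearMap.opNorm_comp_le (Polynomial.aeval (a k) p - cfc f (a k)) V).trans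
    (mul_le_mul_of_nonneg_right h2 (norm_nonneg _))
  have h5 := (ContinuousLinearMap.opNorm_comp_le V (Polynomial.aeval x p - cfc f x)).trans
    (mul_le_mul_of_nonneg_left h3 (norm_nonneg _))
  have h6 := norm_add_le (((Polynomial.aeval (a k) p) ∘L V - V ∘L (Polynomial.aeval x p)) -
      (Polynomial.aeval (a k) p - cfc f (a k)) ∘L V) (V ∘L (Polynomial.aeval x p - cfc f x))
  have h7 := norm_sub_le ((Polynomial.aeval (a k) p) ∘L V - V ∘L (Polynomial.aeval x p))
      ((Polynomial.aeval (a k) p - cfc f (a k)) ∘L V)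
  rw [mul_comm ‖V‖ δ] at h5
  linarith

theorem exists_isometry_s9 (hH : ¬ FiniteDimensional ℂ H) (n : ℕ) :
    Nonempty (EuclideanSpace ℂ (Fin n) →ₗᵢ[ℂ] H) := by
  have h1 : (n : Cardinal) ≤ Module.rank ℂ H := by
    refine (Cardinal.natCast_le_aleph0).trans ?_
    by_contra h
    exact hH (Module.rank_lt_aleph0_iff.1 (not_le.1 h))
  obtain ⟨v, hv⟩ := Module.le_rank_iff.1 h1
  let S := Submodule.span ℂ (Set.range v)
  have : FiniteDimensional ℂ S := FiniteDimensional.span_of_finite ℂ (Set.finite_range v)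
  have hS : Module.finrank ℂ S = n := by simpa using finrank_span_eq_card hv
  exact ⟨S.subtypeₗᵢ.comp ((stdOrthonormalBasis ℂ S).reindex
    (finCongr hS)).repr.symm.toLinearIsometry⟩

theorem spectrum_subset_Icc {B : Type} [CStarAlgebra B] (b : B)
    (hs : spectrum ℝ b ⊆ Set.Ici 0) {R : ℝ} (hR : ‖b‖ ≤ R) : spectrum ℝ b ⊆ Set.Icc 0 R := by
  intro t ht
  refine ⟨hs ht, ?_⟩
  cases subsingleton_or_nontrivial B
  · simp [spectrum.of_subsingleton] at ht
  · exact (le_abs_self t).trans ((spectrum.norm_le_norm_of_mem ht).trans hR)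

end

/-! ### The theorem -/

/-- If `A` has an irreducible representation on an infinite-dimensional Hilbert space,
then every `A`-monotone continuous function is operator monotone: `P_A = P_∞`. -/
theorem stmt9 (A : Type) [CStarAlgebra A] [PartialOrder A] [StarOrderedRing A]
    (H : Type) [NormedAddCommGroup H] [InnerProductSpace ℂ H] [CompleteSpace H]
    (hH : ¬ FiniteDimensional ℂ H)
    (π : A →⋆ₐ[ℂ] (H →L[ℂ] H)) (hπ : IsIrreducibleRep π)
    (f : ℝ → ℝ) (hf : ContinuousOn f (Set.Ici (0:ℝ))) (hA : AMonotone A f) :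
    ∀ n : ℕ, MatrixMonotone n f := by
  intro n x y hx hy hxs hys hxy
  have : Nontrivial H := by
    by_contra h
    rw [not_nontrivial_iff_subsingleton] at h
    exact hH inferInstance
  obtain ⟨V⟩ := exists_isometry_s9 hH n
  have hx0 : 0 ≤ x := (StarOrderedRing.nonneg_iff_spectrum_nonneg (R := ℝ) x hx).2
    fun t ht => hxs ht
  obtain ⟨R, a, ha, hlim⟩ := approximable_of_nonneg hπ V x
    ((ContinuousLinearMap.nonneg_iff_isPositive x).1 hx0)
  obtain ⟨R', d, hd, hlim'⟩ := approximable_of_nonneg hπ V (y - x)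
    ((ContinuousLinearMap.le_def x y).1 hxy)
  let b : ℕ → A := fun k => a k + d k
  have hb0 : ∀ k, 0 ≤ b k := fun k => add_nonneg (ha k).1 (hd k).1
  have hblim : Tendsto (fun k => π (b k) ∘L V.toContinuousLinearMap) atTop
      (𝓝 (V.toContinuousLinearMap ∘L y)) := by
    convert hlim.add hlim' using 2
    · ext; simp [b]
    · ext; simp
  have main : ∀ (z : MatAlg n), IsSelfAdjoint z → spectrum ℝ z ⊆ Set.Ici 0 → ∀ (c : ℕ → A) (r : ℝ),
      (∀ k, 0 ≤ c k) → (∀ k, ‖c k‖ ≤ r) →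
      Tendsto (fun k => π (c k) ∘L V.toContinuousLinearMap) atTop
        (𝓝 (V.toContinuousLinearMap ∘L z)) →
      Tendsto (fun k => V.toContinuousLinearMap.adjoint ∘L π (cfc f (c k)) ∘L
        V.toContinuousLinearMap) atTop (𝓝 (cfc f z)) := by
    intro z hz hzs c r hc hcr hl
    have hsa : ∀ k, IsSelfAdjoint (c k) := fun k => IsSelfAdjoint.of_nonneg (hc k)
    have hcs : ∀ k, spectrum ℝ (c k) ⊆ Set.Ici 0 := fun k t ht =>
      spectrum_nonneg_of_nonneg (hc k) ht
    have hsub : ∀ k, spectrum ℝ (π (c k)) ⊆ Set.Ici 0 := fun k =>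
      (AlgHom.spectrum_apply_subset (π.toAlgHom.restrictScalars ℝ) (c k)).trans (hcs k)
    have hnr : ∀ k, ‖π (c k)‖ ≤ max r ‖z‖ := fun k =>
      (norm_rep_le (c k)).trans ((hcr k).trans (le_max_left _ _))
    have h1 := tendsto_cfc V.toContinuousLinearMap z hz (max r ‖z‖)
      (spectrum_subset_Icc z hzs (le_max_right _ _)) (fun k => π (c k)) (fun k => (hsa k).map π)
      (fun k => spectrum_subset_Icc _ (hsub k) (hnr k)) hnr hl f (hf.mono Set.Icc_subset_Ici_self)
    have h2 := ((ContinuousLinearMap.compL ℂ (EuclideanSpace ℂ (Fin n)) H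
      (EuclideanSpace ℂ (Fin n)) V.toContinuousLinearMap.adjoint).continuous.tendsto _).comp h1
    have h3 : V.toContinuousLinearMap.adjoint ∘L (V.toContinuousLinearMap ∘L cfc f z) =
        cfc f z := by
      ext1 v
      refine ext_inner_right ℂ fun w => ?_
      simp [ContinuousLinearMap.adjoint_inner_left]
    rw [ContinuousLinearMap.compL_apply, h3] at h2
    refine h2.congr fun k => ?_
    rw [map_cfc_rep (c k) (hsa k) f (hf.mono (hcs k))]
    rfl
  refine le_of_tendsto_of_tendsto'
    (main x hx hxs a R (fun k => (ha k).1) (fun k => (ha k).2) hlim)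
    (main y hy hys b (R + R') hb0 (fun k => (norm_add_le _ _).trans
      (add_le_add (ha k).2 (hd k).2)) hblim) fun k => ?_
  have h1 : cfc f (a k) ≤ cfc f (b k) :=
    hA (a k) (b k) (IsSelfAdjoint.of_nonneg (ha k).1) (IsSelfAdjoint.of_nonneg (hb0 k))
      (fun t ht => spectrum_nonneg_of_nonneg (ha k).1 ht)
      (fun t ht => spectrum_nonneg_of_nonneg (hb0 k) ht)
      (le_add_of_nonneg_right (hd k).1)
  have h2 : π (cfc f (a k)) ≤ π (cfc f (b k)) := OrderHomClass.mono π h1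
  rw [ContinuousLinearMap.le_def] at h2 ⊢
  convert h2.adjoint_conj V.toContinuousLinearMap using 1
  ext1 v
  simp
end
end

section
/- If f(t) = t^β is A-monotone on [0,∞) for some β > 1 and a unital C*-algebra A, then A is commutative. -/
/-!
The argument is Pedersen's elementary one; it avoids representation theory.

Iterating the hypothesis shows that `t ↦ t ^ (β ^ n)` preserves the order of positive elements for
every `n`. Choosing `n` with `β ^ n ≥ 2` and applying the Löwner–Heinz inequality with exponent
`2 / β ^ n ∈ [0, 1]`, squaring preserves the order (`Pedersen.sq_le_sq`). Comparing the squares of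
`x` and `x + ε y` and letting `ε → 0` gives `0 ≤ x y + y x` for all positive `x`, `y`
(`Pedersen.anticomm_nonneg`).

For positive `x`, `y` put `s = x y + y x ≥ 0` and `b = i (x y - y x)`, which is self-adjoint.
If `α b² ≤ s²` holds for *all* positive `x`, `y`, then applying it to the pair `x`, `2 y x y` gives
`α (s b + b s)² ≤ (s² - b²)²`. Together with positivity of anticommutators this self-improves
to `(α² + 1) b⁴ ≤ s⁴`, hence to `√(α² + 1) b² ≤ s²` since the square root is operator monotone
(`Pedersen.bound_step`). Starting from `α = 0` one gets `√n b² ≤ s²` for every `n`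
(`Pedersen.bound_sqrt`), so `b = 0` and positive elements commute. Positive elements span the
algebra.
-/

noncomputable section

namespace Pedersen

variable {A : Type} [CStarAlgebra A] [PartialOrder A] [StarOrderedRing A]

lemma rpow_le_rpow_of_aMonotone {β : ℝ} (h : AMonotone A (fun t : ℝ => t ^ β))
    {x y : A} (hx : 0 ≤ x) (hxy : x ≤ y) : x ^ β ≤ y ^ β := by
  have hy := hx.trans hxy
  rw [CFC.rpow_eq_cfc_real hx, CFC.rpow_eq_cfc_real hy]
  exact h x y (.of_nonneg hx) (.of_nonneg hy)
    (fun t ht => spectrum_nonneg_of_nonneg hx ht) (fun t ht => spectrum_nonneg_of_nonneg hy ht) hxy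

lemma rpow_pow_le_rpow_pow {β : ℝ} (hβ : 1 < β) (h : AMonotone A (fun t : ℝ => t ^ β))
    {x y : A} (hx : 0 ≤ x) (hxy : x ≤ y) (n : ℕ) : x ^ (β ^ n) ≤ y ^ (β ^ n) := by
  have hy := hx.trans hxy
  have hβ0 : 0 ≤ β := by linarith
  induction n with
  | zero => simpa [CFC.rpow_one x hx, CFC.rpow_one y hy] using hxy
  | succ k ih =>
    have := rpow_le_rpow_of_aMonotone h CFC.rpow_nonneg ih
    rwa [CFC.rpow_rpow_of_exponent_nonneg x _ _ (by positivity) hβ0 hx,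
      CFC.rpow_rpow_of_exponent_nonneg y _ _ (by positivity) hβ0 hy, ← pow_succ] at this

/-- Monotonicity of some power `β > 1` implies monotonicity of the square, by the Löwner–Heinz
inequality. -/
lemma sq_le_sq {β : ℝ} (hβ : 1 < β) (h : AMonotone A (fun t : ℝ => t ^ β))
    {x y : A} (hx : 0 ≤ x) (hxy : x ≤ y) : x * x ≤ y * y := by
  have hy := hx.trans hxy
  obtain ⟨n, hn⟩ := pow_unbounded_of_one_lt 2 hβ
  have hpos : 0 < β ^ n := by linarith
  have := CFC.rpow_le_rpow (p := 2 / β ^ n) ⟨by positivity, by rw [div_le_one hpos]; exact hn.le⟩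
    (rpow_pow_le_rpow_pow hβ h hx hxy n)
  rw [CFC.rpow_rpow_of_exponent_nonneg x _ _ hpos.le (by positivity) hx,
    CFC.rpow_rpow_of_exponent_nonneg y _ _ hpos.le (by positivity) hy,
    mul_div_cancel₀ _ hpos.ne'] at this
  have e : ∀ z : A, 0 ≤ z → z ^ (2 : ℝ) = z * z := fun z hz => by
    have := CFC.rpow_natCast z 2 hz
    rw [← pow_two, ← this]; norm_num
  rwa [e x hx, e y hy] at this

lemma anticomm_nonneg (hsq : ∀ x y : A, 0 ≤ x → x ≤ y → x * x ≤ y * y)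
    {x y : A} (hx : 0 ≤ x) (hy : 0 ≤ y) : 0 ≤ x * y + y * x := by
  have key : ∀ ε : ℝ, 0 < ε → 0 ≤ (x * y + y * x) + ε • (y * y) := fun ε hε => by
    have h1 := hsq x (x + ε • y) hx (le_add_of_nonneg_right (smul_nonneg hε.le hy))
    have h2 := smul_nonneg (inv_nonneg.2 hε.le) (sub_nonneg.2 h1)
    have e : (x + ε • y) * (x + ε • y) - x * x = ε • ((x * y + y * x) + ε • (y * y)) := by
      simp only [mul_add, add_mul, smul_mul_assoc, mul_smul_comm]
      module
    rwa [e, smul_smul, inv_mul_cancel₀ hε.ne', one_smul] at h2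
  have hlim : Filter.Tendsto (fun ε : ℝ => (x * y + y * x) + ε • (y * y))
      (nhdsWithin 0 (Set.Ioi 0)) (nhds (x * y + y * x)) := by
    have hc : Continuous fun ε : ℝ => (x * y + y * x) + ε • (y * y) := by fun_prop
    have := hc.tendsto 0
    simp only [zero_smul, add_zero] at this
    exact this.mono_left nhdsWithin_le_nhds
  exact ge_of_tendsto hlim (Filter.eventually_of_mem self_mem_nhdsWithin key)

lemma smul_sq_le_sq_of_anticomm (hJ : ∀ x y : A, 0 ≤ x → 0 ≤ y → 0 ≤ x * y + y * x)
    {α : ℝ} (hα : 0 ≤ α) {s b : A} (hs : 0 ≤ s) (hb : IsSelfAdjoint b)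
    (hd : 0 ≤ s * s - b * b) (h1 : α • (b * b) ≤ s * s)
    (h2 : α • ((s * b + b * s) * (s * b + b * s)) ≤ (s * s - b * b) * (s * s - b * b)) :
    √(α ^ 2 + 1) • (b * b) ≤ s * s := by
  have hb2 : 0 ≤ b * b := by simpa [hb.star_eq] using star_mul_self_nonneg b
  have hs2 : 0 ≤ s * s := by
    simpa [(IsSelfAdjoint.of_nonneg hs).star_eq] using star_mul_self_nonneg s
  have n2 := hJ _ _ hb2 hd
  have n3 := hJ _ _ hs (hb.conjugate_nonneg hs)
  have n4 := conjugate_nonneg_of_nonneg hb2 hs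
  have n5 := sub_nonneg.2 (hb.conjugate_le_conjugate h1)
  have n := add_nonneg (add_nonneg (sub_nonneg.2 h2) n2)
    (smul_nonneg hα (add_nonneg (add_nonneg n3 n4) n5))
  have h4 : (√(α ^ 2 + 1) • (b * b)) * (√(α ^ 2 + 1) • (b * b)) ≤ (s * s) * (s * s) := by
    rw [smul_mul_smul_comm, Real.mul_self_sqrt (by positivity), ← sub_nonneg]
    convert n using 1
    simp only [mul_add, add_mul, mul_sub, sub_mul, smul_mul_assoc, mul_smul_comm, mul_assoc]
    module
  have := CFC.sqrt_le_sqrt _ _ h4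
  rwa [CFC.sqrt_mul_self _ (smul_nonneg (Real.sqrt_nonneg _) hb2), CFC.sqrt_mul_self _ hs2] at this

/-- The element `i (x y - y x)`, self-adjoint when `x` and `y` are; for such `x` and `y` it is
`-2` times the imaginary part of `x y`. -/
def icomm (x y : A) : A := Complex.I • (x * y - y * x)

lemma isSelfAdjoint_icomm {x y : A} (hx : 0 ≤ x) (hy : 0 ≤ y) : IsSelfAdjoint (icomm x y) := by
  simp only [IsSelfAdjoint, icomm, star_smul, star_sub, star_mul,
    (IsSelfAdjoint.of_nonneg hx).star_eq, (IsSelfAdjoint.of_nonneg hy).star_eq]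
  simp only [RCLike.star_def, Complex.conj_I]
  module

/-- `α b² ≤ s²` for all positive `x`, `y`, where `s` is the anticommutator and `b` is `icomm`. -/
def Bound (A : Type) [CStarAlgebra A] [PartialOrder A] (α : ℝ) : Prop :=
  ∀ x y : A, 0 ≤ x → 0 ≤ y →
    α • (icomm x y * icomm x y) ≤ (x * y + y * x) * (x * y + y * x)

/-- The self-improvement of the bound, obtained by feeding it the pair `x`, `2 y x y`, whose
anticommutator is `s² - b²` and whose `icomm` is `s b + b s`. -/
lemma bound_step (hJ : ∀ x y : A, 0 ≤ x → 0 ≤ y → 0 ≤ x * y + y * x)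
    {α : ℝ} (hα : 0 ≤ α) (h : Bound A α) : Bound A √(α ^ 2 + 1) := by
  intro x y hx hy
  have hz : 0 ≤ y * x * y + y * x * y :=
    add_nonneg (conjugate_nonneg_of_nonneg hx hy) (conjugate_nonneg_of_nonneg hx hy)
  have e1 : x * (y * x * y + y * x * y) + (y * x * y + y * x * y) * x =
      (x * y + y * x) * (x * y + y * x) - icomm x y * icomm x y := by
    rw [icomm, smul_mul_smul_comm, Complex.I_mul_I, neg_one_smul]
    noncomm_ring
  have e2 : icomm x (y * x * y + y * x * y) =
      (x * y + y * x) * icomm x y + icomm x y * (x * y + y * x) := by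
    simp only [icomm, mul_smul_comm, smul_mul_assoc, ← smul_add]
    congr 1
    noncomm_ring
  have h2 := h _ _ hx hz
  have hd := hJ _ _ hx hz
  rw [e1] at h2 hd
  rw [e2] at h2
  exact smul_sq_le_sq_of_anticomm hJ hα (hJ x y hx hy) (isSelfAdjoint_icomm hx hy) hd
    (h x y hx hy) h2

lemma bound_sqrt (hJ : ∀ x y : A, 0 ≤ x → 0 ≤ y → 0 ≤ x * y + y * x) (n : ℕ) :
    Bound A √(n : ℝ) := by
  induction n with
  | zero =>
    intro x y hx hy
    have hs := hJ x y hx hy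
    simpa [(IsSelfAdjoint.of_nonneg hs).star_eq] using star_mul_self_nonneg (x * y + y * x)
  | succ k ih =>
    have := bound_step hJ (Real.sqrt_nonneg _) ih
    rwa [Real.sq_sqrt (by positivity), ← Nat.cast_succ] at this

lemma commute_of_nonneg (hJ : ∀ x y : A, 0 ≤ x → 0 ≤ y → 0 ≤ x * y + y * x)
    {x y : A} (hx : 0 ≤ x) (hy : 0 ≤ y) : Commute x y := by
  set b := icomm x y with hbdef
  have hb : IsSelfAdjoint b := isSelfAdjoint_icomm hx hy
  have hb2 : 0 ≤ b * b := by simpa [hb.star_eq] using star_mul_self_nonneg b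
  have key : ∀ n : ℕ, n * ‖b * b‖ ≤ ‖(x * y + y * x) * (x * y + y * x)‖ := fun n => by
    -- the exponent `n ^ 2` turns the constant `√(n ^ 2)` into `n`
    have h := bound_sqrt hJ (n ^ 2) x y hx hy
    rw [Nat.cast_pow, Real.sqrt_sq (by positivity)] at h
    have := CStarAlgebra.norm_le_norm_of_nonneg_of_le
      (smul_nonneg (Nat.cast_nonneg (α := ℝ) n) hb2) h
    rwa [norm_smul, Real.norm_natCast] at this
  have hnorm : ‖b * b‖ = 0 := by
    by_contra hne
    have hpos : 0 < ‖b * b‖ := lt_of_le_of_ne (norm_nonneg _) (Ne.symm hne)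
    obtain ⟨n, hn⟩ := exists_nat_gt (‖(x * y + y * x) * (x * y + y * x)‖ / ‖b * b‖)
    rw [div_lt_iff₀ hpos] at hn
    exact absurd (key n) (not_le.2 hn)
  have hb0 : b = 0 := by
    rw [← CStarRing.star_mul_self_eq_zero_iff, hb.star_eq]
    exact norm_eq_zero.1 hnorm
  rw [hbdef, icomm, smul_eq_zero] at hb0
  exact sub_eq_zero.1 (hb0.resolve_left Complex.I_ne_zero)

end Pedersen

/-- Ogasawara–Pedersen: if `t ↦ t^β` is `A`-monotone for some `β > 1`, then `A` is
commutative. -/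
theorem stmt15 (A : Type) [CStarAlgebra A] [PartialOrder A] [StarOrderedRing A]
    (β : ℝ) (hβ : 1 < β)
    (h : AMonotone A (fun t : ℝ => t ^ β)) :
    ∀ x y : A, x * y = y * x := by
  have hJ : ∀ x y : A, 0 ≤ x → 0 ≤ y → 0 ≤ x * y + y * x := fun x y hx hy =>
    Pedersen.anticomm_nonneg (fun _ _ hx hxy => Pedersen.sq_le_sq hβ h hx hxy) hx hy
  intro x y
  have mem : ∀ z : A, z ∈ Submodule.span ℂ {a : A | 0 ≤ a} := fun z => by
    rw [CStarAlgebra.span_nonneg]; trivial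
  change Commute x y
  induction mem x, mem y using Submodule.span_induction₂ with
  | mem_mem a b ha hb => exact Pedersen.commute_of_nonneg hJ ha hb
  | zero_left b _ => exact Commute.zero_left b
  | zero_right a _ => exact Commute.zero_right a
  | add_left a b c _ _ _ h1 h2 => exact h1.add_left h2
  | add_right a b c _ _ _ h1 h2 => exact h1.add_right h2
  | smul_left r a b _ _ h1 => exact h1.smul_left r
  | smul_right r a b _ _ h1 => exact h1.smul_right r
end
end

section
/- If the function f(t) = e^t is A-monotone on [0,∞) for a unital C*-algebra A (i.e., 0 ≤ x ≤ y implies exp(x) ≤ exp(y)), then A is commutative. -/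
/-!
Since `log` is operator monotone, exp-monotonicity of `A` gives
`x ^ 2 = exp (2 log x) ≤ exp (2 log y) = y ^ 2` whenever `1 ≤ x ≤ y`. Comparing the squares of
`1 + n x` and `1 + n x + y` for positive `x`, `y` and letting `n → ∞` shows that the Jordan product
`x y + y x` is positive (`jordan_nonneg_of_sq_mono`).

That this forces commutativity is the Ogasawara–Pedersen argument. For positive `x`, `y` put
`p = x y + y x ≥ 0` and `b = i (x y - y x)`, which is self-adjoint. Replacing the pair `(x, y)` by
`(x, y x y)` replaces `(p, b)` by `((p² - b²) / 2, (p b + b p) / 2)`. Positivity of the new `p` is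
`b² ≤ p²`; and a bound `l b² ≤ p²` valid for all pairs, applied to the new pair, improves itself to
`√(l² + 1) b² ≤ p²` (`bound_step`). Hence `√(n + 1) b² ≤ p²` for all `n`, so `b = 0`.
-/


noncomputable section

section OgasawaraPedersen

variable {A : Type} [CStarAlgebra A]

theorem I_smul_sq (d : A) : (Complex.I • d) ^ 2 = -(d ^ 2) := by
  rw [smul_pow, Complex.I_sq, neg_one_smul]

theorem jordan_conj (x y : A) :
    (2 : ℕ) • (x * (y * x * y) + y * x * y * x) =
      (x * y + y * x) ^ 2 - (Complex.I • (x * y - y * x)) ^ 2 := by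
  rw [I_smul_sq]; noncomm_ring

theorem commutator_conj (x y : A) :
    (2 : ℕ) • (Complex.I • (x * (y * x * y) - y * x * y * x)) =
      (x * y + y * x) * (Complex.I • (x * y - y * x)) +
        (Complex.I • (x * y - y * x)) * (x * y + y * x) := by
  rw [mul_smul_comm, smul_mul_assoc, ← smul_add, smul_comm]
  congr 1
  noncomm_ring

variable [PartialOrder A] [StarOrderedRing A]

/-- Squaring is monotone on elements `≥ 1`, because `x ^ 2 = exp (2 log x)`; the condition `1 ≤ x`
makes `2 log x` positive, as exp-monotonicity requires. -/
theorem sq_mono_of_exp_mono (h : AMonotone A Real.exp) {x y : A} (hx : 1 ≤ x) (hxy : x ≤ y) :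
    x ^ 2 ≤ y ^ 2 := by
  have hx' : IsStrictlyPositive x := (isStrictlyPositive_one (A := A)).of_le hx
  have hy' : IsStrictlyPositive y := hx'.of_le hxy
  have key : ∀ z : A, IsStrictlyPositive z → cfc Real.exp (2 • CFC.log z) = z ^ 2 := by
    intro z hz
    rw [← CFC.log_pow' 2 z hz, CFC.real_exp_eq_normedSpace_exp .log,
      CFC.exp_log _ (by rw [pow_two]; exact (hz.isUnit.mul hz.isUnit).isStrictlyPositive (by
        simpa [hz.isSelfAdjoint.star_eq] using star_mul_self_nonneg z))]
  have hlog : ∀ z : A, 1 ≤ z → 0 ≤ 2 • CFC.log z := fun z hz =>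
    nsmul_nonneg (by simpa using CFC.log_le_log hz isStrictlyPositive_one) 2
  have hlx := hlog x hx
  have hly := hlog y (hx.trans hxy)
  have := h (2 • CFC.log x) (2 • CFC.log y) (.of_nonneg hlx) (.of_nonneg hly)
    (fun t ht => spectrum_nonneg_of_nonneg hlx ht) (fun t ht => spectrum_nonneg_of_nonneg hly ht)
    (nsmul_le_nsmul_right (CFC.log_le_log hxy hx') 2)
  rwa [key x hx', key y hy'] at this

theorem nonneg_of_forall_add_nsmul_nonneg {c p : A} (h : ∀ n : ℕ, 0 ≤ c + (n : ℝ) • p) :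
    0 ≤ p := by
  have lim : Filter.Tendsto (fun n : ℕ => (1 / ((n : ℝ) + 1)) • c + p)
      Filter.atTop (nhds p) := by
    simpa using (tendsto_one_div_add_atTop_nhds_zero_nat (𝕜 := ℝ)).smul_const c |>.add_const p
  refine ge_of_tendsto' lim fun n => ?_
  have hn : (0 : ℝ) < (n : ℝ) + 1 := by positivity
  have := smul_nonneg (one_div_pos.2 hn).le (h (n + 1))
  rwa [smul_add, smul_smul, Nat.cast_succ, one_div_mul_cancel hn.ne', one_smul] at this

/-- The squares of `1 + n x` and `1 + n x + y` differ by `n (x y + y x)` plus a term that does not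
depend on `n`. -/
theorem jordan_nonneg_of_sq_mono (h : ∀ x y : A, 1 ≤ x → x ≤ y → x ^ 2 ≤ y ^ 2)
    {x y : A} (hx : 0 ≤ x) (hy : 0 ≤ y) : 0 ≤ x * y + y * x := by
  refine nonneg_of_forall_add_nsmul_nonneg (c := 2 • y + y ^ 2) fun n => ?_
  have := h (1 + n • x) (1 + n • x + y) (le_add_of_nonneg_right (nsmul_nonneg hx n))
    (le_add_of_nonneg_right hy)
  rw [← sub_nonneg] at this
  convert this using 1
  rw [Nat.cast_smul_eq_nsmul]
  simp only [pow_two, add_mul, mul_add, smul_mul_assoc, mul_smul_comm, smul_add, one_mul, mul_one]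
  abel

/-- `l b² ≤ p²` for all positive `x`, `y`, where `p = x y + y x` and `b = i (x y - y x)`. -/
def PedersenBound (A : Type) [CStarAlgebra A] [PartialOrder A] (l : ℝ) : Prop :=
  ∀ x y : A, 0 ≤ x → 0 ≤ y →
    l • (Complex.I • (x * y - y * x)) ^ 2 ≤ (x * y + y * x) ^ 2

theorem isSelfAdjoint_I_smul_commutator {x y : A} (hx : 0 ≤ x) (hy : 0 ≤ y) :
    IsSelfAdjoint (Complex.I • (x * y - y * x)) := by
  have hx' := (IsSelfAdjoint.of_nonneg hx).star_eq
  have hy' := (IsSelfAdjoint.of_nonneg hy).star_eq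
  rw [IsSelfAdjoint, star_smul, star_sub, star_mul, star_mul, hx', hy', Complex.star_def,
    Complex.conj_I, neg_smul, ← smul_neg, neg_sub]

theorem conj_nonneg {x y : A} (hx : 0 ≤ x) (hy : 0 ≤ y) : 0 ≤ y * x * y :=
  conjugate_nonneg_of_nonneg hx hy

theorem bound_one (hJ : ∀ x y : A, 0 ≤ x → 0 ≤ y → 0 ≤ x * y + y * x) :
    PedersenBound A 1 := by
  intro x y hx hy
  rw [one_smul, ← sub_nonneg, ← jordan_conj]
  exact nsmul_nonneg (hJ _ _ hx (conj_nonneg hx hy)) 2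

/-- The bound for `(x, y x y)` reads `l (p b + b p)² ≤ (p² - b²)²`. On the left
`(p b + b p)² = b p² b + p b² p + (p (b p b) + (b p b) p) ≥ l b⁴`, the bracket being a Jordan
product of positive elements. On the right `p² b² + b² p² ≥ 2 l b⁴`, since the Jordan product of
`p² - l b²` and `b²` is positive. Thus `(l² + 2 l - 1) b⁴ ≤ p⁴`, and operator monotonicity of the
square root finishes, as `l² + 2 l - 1 ≥ l² + 1`. -/
theorem bound_step (hJ : ∀ x y : A, 0 ≤ x → 0 ≤ y → 0 ≤ x * y + y * x) {l : ℝ} (hl : 1 ≤ l)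
    (h : PedersenBound A l) : PedersenBound A (√(l ^ 2 + 1)) := by
  intro x y hx hy
  have h1 := h x y hx hy
  have h2 := h x (y * x * y) hx (conj_nonneg hx hy)
  have hp : 0 ≤ x * y + y * x := hJ x y hx hy
  have hb := isSelfAdjoint_I_smul_commutator hx hy
  have ej := jordan_conj x y
  have ec := commutator_conj x y
  set p := x * y + y * x
  set b := Complex.I • (x * y - y * x)
  set p' := x * (y * x * y) + y * x * y * x
  set b' := Complex.I • (x * (y * x * y) - y * x * y * x)
  have hl0 : 0 ≤ l := by linarith
  have hps : IsSelfAdjoint p := .of_nonneg hp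
  have hb2 : 0 ≤ b ^ 2 := hb.sq_nonneg
  have hp2 : 0 ≤ p ^ 2 := hps.sq_nonneg
  have h3 : l • (p * b + b * p) ^ 2 ≤ (p ^ 2 - b ^ 2) ^ 2 := by
    rw [← ej, ← ec, smul_pow _ b', smul_pow _ p', smul_comm]
    exact nsmul_le_nsmul_right h2 _
  have t1 : 0 ≤ p * (b * p * b) + (b * p * b) * p := hJ _ _ hp (hb.conjugate_nonneg hp)
  have t2 : 0 ≤ p * b ^ 2 * p := hps.conjugate_nonneg hb2
  have t3 : 0 ≤ b * (p ^ 2 - l • b ^ 2) * b := hb.conjugate_nonneg (sub_nonneg.2 h1)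
  have t4 : 0 ≤ (p ^ 2 - l • b ^ 2) * b ^ 2 + b ^ 2 * (p ^ 2 - l • b ^ 2) :=
    hJ _ _ (sub_nonneg.2 h1) hb2
  have t5 : 0 ≤ (b ^ 2) ^ 2 := (IsSelfAdjoint.of_nonneg hb2).sq_nonneg
  have h4 : (l ^ 2 + 1) • (b ^ 2) ^ 2 ≤ (p ^ 2) ^ 2 := by
    have s := add_nonneg (add_nonneg (add_nonneg (sub_nonneg.2 h3)
      (smul_nonneg hl0 (add_nonneg (add_nonneg t1 t2) t3))) t4)
      (smul_nonneg (show 0 ≤ 2 * l - 2 by linarith) t5)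
    rw [← sub_nonneg]
    convert s using 1
    simp only [pow_two, add_mul, mul_add, sub_mul, mul_sub, smul_mul_assoc, mul_smul_comm,
      smul_add, smul_sub, mul_assoc]
    module
  have h5 := CFC.sqrt_le_sqrt _ _ h4
  rw [CFC.sqrt_sq _ hp2] at h5
  rwa [CFC.sqrt_unique (b := √(l ^ 2 + 1) • b ^ 2) _ (smul_nonneg (Real.sqrt_nonneg _) hb2)] at h5
  rw [smul_mul_smul_comm, Real.mul_self_sqrt (by positivity), pow_two (b ^ 2)]

theorem bound_all (hJ : ∀ x y : A, 0 ≤ x → 0 ≤ y → 0 ≤ x * y + y * x) (n : ℕ) :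
    PedersenBound A (√((n : ℝ) + 1)) := by
  induction n with
  | zero => simpa using bound_one hJ
  | succ k ih =>
    have := bound_step hJ (Real.one_le_sqrt.2 (by simp)) ih
    rwa [Real.sq_sqrt (by positivity), ← Nat.cast_succ] at this

theorem commute_of_nonneg (hJ : ∀ x y : A, 0 ≤ x → 0 ≤ y → 0 ≤ x * y + y * x)
    {x y : A} (hx : 0 ≤ x) (hy : 0 ≤ y) : x * y = y * x := by
  have hb := isSelfAdjoint_I_smul_commutator hx hy
  have hbound : ∀ n : ℕ, √((n : ℝ) + 1) * ‖(Complex.I • (x * y - y * x)) ^ 2‖ ≤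
      ‖(x * y + y * x) ^ 2‖ := by
    intro n
    have := CStarAlgebra.norm_le_norm_of_nonneg_of_le
      (smul_nonneg (Real.sqrt_nonneg _) hb.sq_nonneg) (bound_all hJ n x y hx hy)
    rwa [norm_smul, Real.norm_of_nonneg (Real.sqrt_nonneg _)] at this
  have hz : ‖(Complex.I • (x * y - y * x)) ^ 2‖ = 0 := by
    by_contra hne
    have hpos := lt_of_le_of_ne (norm_nonneg _) (Ne.symm hne)
    obtain ⟨n, hn⟩ := exists_nat_gt
      ((‖(x * y + y * x) ^ 2‖ / ‖(Complex.I • (x * y - y * x)) ^ 2‖) ^ 2)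
    have h1 := (le_div_iff₀ hpos).2 (hbound n)
    have h2 := (Real.sqrt_le_left (by positivity)).1 h1
    linarith
  rw [norm_eq_zero, pow_two] at hz
  have h0 : star (Complex.I • (x * y - y * x)) * (Complex.I • (x * y - y * x)) = 0 := by
    rwa [hb.star_eq]
  rw [CStarRing.star_mul_self_eq_zero_iff] at h0
  exact sub_eq_zero.1 ((smul_eq_zero.1 h0).resolve_left Complex.I_ne_zero)

end OgasawaraPedersen

/-- Wu's theorem: if `t ↦ e^t` is `A`-monotone, then `A` is commutative. -/
theorem stmt16 (A : Type) [CStarAlgebra A] [PartialOrder A] [StarOrderedRing A]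
    (h : AMonotone A Real.exp) :
    ∀ x y : A, x * y = y * x := by
  have hpos : ∀ x y : A, 0 ≤ x → 0 ≤ y → x * y = y * x := fun x y hx hy =>
    commute_of_nonneg (fun _ _ hu hv =>
      jordan_nonneg_of_sq_mono (fun _ _ => sq_mono_of_exp_mono h) hu hv) hx hy
  intro x y
  have hx : x ∈ Submodule.span ℂ {a : A | 0 ≤ a} := by simp [CStarAlgebra.span_nonneg]
  have hy : y ∈ Submodule.span ℂ {a : A | 0 ≤ a} := by simp [CStarAlgebra.span_nonneg]
  induction hx, hy using Submodule.span_induction₂ with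
  | mem_mem u v hu hv => exact hpos u v hu hv
  | zero_left => simp
  | zero_right => simp
  | add_left u v w _ _ _ h1 h2 => rw [add_mul, mul_add, h1, h2]
  | add_right u v w _ _ _ h1 h2 => rw [add_mul, mul_add, h1, h2]
  | smul_left r u v _ _ h1 => rw [smul_mul_assoc, mul_smul_comm, h1]
  | smul_right r u v _ _ h1 => rw [smul_mul_assoc, mul_smul_comm, h1]
end
end

section
/- Let A be a residually finite-dimensional C*-algebra (the finite-dimensional irreducible representations of A separate points, i.e., ⋂_π Ker(π) = {0} over finite-dimensional irreducible π). Then every non-zero C*-subalgebra B of A admits a non-zero finite-dimensional irreducible representation. -/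
/-!
Choose `b ∈ B` nonzero and a finite-dimensional representation `π` of `A` with `π b ≠ 0`. Among the
subspaces of the representation space that are invariant under `B` and not annihilated by `B`, take
one, `M`, minimal for inclusion. If `K ≤ M` is invariant, then so is `Kᗮ ⊓ M`, because `B` is closed
under `star`. When `K ≠ M`, minimality says that `B` annihilates `K`, so `B` does not annihilate
`Kᗮ ⊓ M`; minimality again gives `Kᗮ ⊓ M = M`, hence `K = ⊥`. So `B` acts irreducibly on `M`
(`exists_minimal_invariant`), and an orthonormal basis of `M` turns this action into a
representation on a Euclidean space (`compress`). This replaces the structure theorem for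
finite-dimensional C*-algebras.
-/

noncomputable section

/-- A star-closed family of operators, not all zero, on a finite-dimensional Hilbert space has an
invariant subspace `M` on which it acts irreducibly and not by zero. -/
lemma exists_minimal_invariant {H : Type*} [NormedAddCommGroup H] [InnerProductSpace ℂ H]
    [FiniteDimensional ℂ H] [CompleteSpace H] (S : Set (H →L[ℂ] H))
    (hstar : ∀ T ∈ S, star T ∈ S) (hne : ∃ T ∈ S, T ≠ 0) :
    ∃ M : Submodule ℂ H, (∀ T ∈ S, ∀ x ∈ M, T x ∈ M) ∧ (∃ T ∈ S, ∃ x ∈ M, T x ≠ 0) ∧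
      ∀ K ≤ M, (∀ T ∈ S, ∀ x ∈ K, T x ∈ K) → K = ⊥ ∨ K = M := by
  let P : Submodule ℂ H → Prop := fun M =>
    (∀ T ∈ S, ∀ x ∈ M, T x ∈ M) ∧ (∃ T ∈ S, ∃ x ∈ M, T x ≠ 0)
  have hP : ∃ M, P M := by
    obtain ⟨T, hT, hT0⟩ := hne
    refine ⟨⊤, fun _ _ _ _ => trivial, T, hT, ?_⟩
    by_contra! h
    exact hT0 (ContinuousLinearMap.ext fun x => h x trivial)
  obtain ⟨M, hM, hmin⟩ := WellFounded.has_min (wellFounded_lt (α := Submodule ℂ H)) {M | P M} hP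
  refine ⟨M, hM.1, hM.2, fun K hK hinv => ?_⟩
  by_contra! hcon
  obtain ⟨hK0, hKM⟩ := hcon
  have hzero : ∀ T ∈ S, ∀ x ∈ K, T x = 0 := by
    by_contra! h
    exact hmin K ⟨hinv, h⟩ (lt_of_le_of_ne hK hKM)
  have hL : P (Kᗮ ⊓ M) := by
    refine ⟨fun T hT x hx => ⟨?_, hM.1 T hT x hx.2⟩, ?_⟩
    · rw [SetLike.mem_coe, Submodule.mem_orthogonal]
      intro u hu
      rw [← ContinuousLinearMap.adjoint_inner_left]
      exact (Submodule.mem_orthogonal _ _).1 hx.1 _ (hinv _ (hstar T hT) u hu)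
    · obtain ⟨T, hT, x, hx, hTx⟩ := hM.2
      obtain ⟨y, hy, z, hz, rfl⟩ := K.exists_add_mem_mem_orthogonal x
      refine ⟨T, hT, z, ⟨hz, ?_⟩, ?_⟩
      · simpa using M.sub_mem hx (hK hy)
      · simpa [hzero T hT y hy] using hTx
  have hLM : Kᗮ ⊓ M = M := by
    by_contra h
    exact hmin _ hL (lt_of_le_of_ne inf_le_right h)
  apply hK0
  rw [eq_bot_iff, ← K.inf_orthogonal_eq_bot]
  exact le_inf le_rfl (hK.trans (inf_eq_right.1 hLM))

/-- The compression `b ↦ J† (ρ b) J` of `ρ` along a linear isometry `J`, which is a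
`*`-homomorphism because the range of `J` is invariant under `ρ`. -/
def compress {B : Type*} [NonUnitalSemiring B] [StarRing B] [Module ℂ B]
    {H E : Type*} [NormedAddCommGroup H] [InnerProductSpace ℂ H] [CompleteSpace H]
    [NormedAddCommGroup E] [InnerProductSpace ℂ E] [CompleteSpace E]
    (ρ : B →⋆ₙₐ[ℂ] (H →L[ℂ] H)) (J : E →ₗᵢ[ℂ] H)
    (hJ : ∀ b x, ∃ y, ρ b (J x) = J y) : B →⋆ₙₐ[ℂ] (E →L[ℂ] E) where
  toFun b := (J.toContinuousLinearMap.adjoint).comp ((ρ b).comp J.toContinuousLinearMap)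
  map_smul' c b := by ext; simp
  map_zero' := by ext; simp
  map_add' a b := by ext; simp
  map_mul' a b := by
    ext x
    obtain ⟨y, hy⟩ := hJ b x
    have hJJ : J.toContinuousLinearMap.adjoint (J y) = y :=
      ext_inner_right ℂ fun v => by
        rw [ContinuousLinearMap.adjoint_inner_left]; exact J.inner_map_map y v
    simp [hy, hJJ]
  map_star' b := by
    rw [map_star, ContinuousLinearMap.star_eq_adjoint, ContinuousLinearMap.star_eq_adjoint,
      ContinuousLinearMap.adjoint_comp, ContinuousLinearMap.adjoint_comp,
      ContinuousLinearMap.adjoint_adjoint, ContinuousLinearMap.comp_assoc]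

lemma map_compress {B : Type*} [NonUnitalSemiring B] [StarRing B] [Module ℂ B]
    {H E : Type*} [NormedAddCommGroup H] [InnerProductSpace ℂ H] [CompleteSpace H]
    [NormedAddCommGroup E] [InnerProductSpace ℂ E] [CompleteSpace E]
    (ρ : B →⋆ₙₐ[ℂ] (H →L[ℂ] H)) (J : E →ₗᵢ[ℂ] H)
    (hJ : ∀ b x, ∃ y, ρ b (J x) = J y) (b : B) (x : E) :
    J (compress ρ J hJ b x) = ρ b (J x) := by
  obtain ⟨y, hy⟩ := hJ b x
  rw [hy]
  congr 1
  refine ext_inner_right ℂ fun v => ?_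
  change inner ℂ (J.toContinuousLinearMap.adjoint (ρ b (J x))) v = _
  rw [hy, ContinuousLinearMap.adjoint_inner_left]
  exact J.inner_map_map y v

/-- If `A` is residually finite-dimensional, then every non-zero (closed) C*-subalgebra
`B` of `A` admits a non-zero finite-dimensional irreducible representation. -/
theorem stmt19 (A : Type) [CStarAlgebra A]
    (hRFD : ∀ a : A, a ≠ 0 →
      ∃ (k : ℕ) (π : A →⋆ₐ[ℂ] MatAlg k), IsIrreducibleRep π ∧ π a ≠ 0)
    (B : NonUnitalStarSubalgebra ℂ A) (hBclosed : IsClosed (B : Set A))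
    (hB : (B : Set A) ≠ {0}) :
    ∃ (k : ℕ) (π : B →⋆ₙₐ[ℂ] MatAlg k), 0 < k ∧ π ≠ 0 ∧
      (∀ K : Submodule ℂ (EuclideanSpace ℂ (Fin k)), IsClosed (K : Set (EuclideanSpace ℂ (Fin k))) →
        (∀ b : B, ∀ x ∈ K, π b x ∈ K) → K = ⊥ ∨ K = ⊤) := by
  obtain ⟨b, hb, hb0⟩ : ∃ b ∈ B, b ≠ 0 := by
    by_contra! h
    exact hB (Set.eq_singleton_iff_unique_mem.2 ⟨B.zero_mem, h⟩)
  obtain ⟨k, π, -, hπ⟩ := hRFD b hb0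
  let ρ : B →⋆ₙₐ[ℂ] MatAlg k :=
    (π : A →⋆ₙₐ[ℂ] MatAlg k).comp (NonUnitalStarSubalgebraClass.subtype B)
  obtain ⟨M, hMinv, ⟨T, ⟨c, rfl⟩, x, hx, hcx⟩, hirr⟩ :=
    exists_minimal_invariant (Set.range ρ)
      (by rintro _ ⟨a, rfl⟩; exact ⟨star a, map_star ρ a⟩) ⟨ρ ⟨b, hb⟩, ⟨_, rfl⟩, hπ⟩
  let V := (stdOrthonormalBasis ℂ M).repr.symm
  let J : EuclideanSpace ℂ (Fin (Module.finrank ℂ M)) →ₗᵢ[ℂ] EuclideanSpace ℂ (Fin k) :=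
    M.subtypeₗᵢ.comp V.toLinearIsometry
  have hJM : ∀ v, J v ∈ M := fun v => (V v).2
  have hMJ : ∀ z ∈ M, ∃ v, J v = z := fun z hz =>
    ⟨V.symm ⟨z, hz⟩, congrArg Subtype.val (V.apply_symm_apply ⟨z, hz⟩)⟩
  have hJ : ∀ b v, ∃ y, ρ b (J v) = J y := fun b v => by
    obtain ⟨y, hy⟩ := hMJ _ (hMinv _ ⟨b, rfl⟩ _ (hJM v))
    exact ⟨y, hy.symm⟩
  refine ⟨_, compress ρ J hJ, ?_, ?_, ?_⟩
  · have : Nontrivial M := ⟨⟨x, hx⟩, 0, fun h => hcx <| by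
      rw [show x = 0 from congrArg Subtype.val h, map_zero]⟩
    exact Module.finrank_pos
  · intro h
    obtain ⟨v, rfl⟩ := hMJ x hx
    apply hcx
    rw [← map_compress ρ J hJ, h]
    simp
  · intro K _ hK
    have hinj : Function.Injective (Submodule.map J.toLinearMap) :=
      Submodule.map_injective_of_injective J.injective
    have htop : Submodule.map J.toLinearMap ⊤ = M := by
      ext z
      constructor
      · rintro ⟨v, -, rfl⟩; exact hJM v
      · intro hz
        obtain ⟨v, hv⟩ := hMJ z hz
        exact ⟨v, trivial, hv⟩
    rcases hirr (K.map J.toLinearMap) (by rintro _ ⟨v, -, rfl⟩; exact hJM v) (by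
      rintro _ ⟨b, rfl⟩ _ ⟨v, hv, rfl⟩
      exact ⟨_, hK b v hv, map_compress ρ J hJ b v⟩) with h | h
    · exact Or.inl (hinj (h.trans (Submodule.map_bot _).symm))
    · exact Or.inr (hinj (h.trans htop.symm))
end
end
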